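/- Let f : ℝ → ℝ be smooth, positive, with f(x) → 0 as |x| → ∞ and with bounded first and second derivatives. Let u : [0,T) × ℝ → ℝ be a classical solution of ∂u/∂t = ∂²u/∂x² − 2 f(x) u − u² with initial datum u(0,·) = h, with u(t,x) ≤ 0 everywhere and u(t,·) ∈ L^∞(ℝ) for each t ∈ [0,T). Let w : [0,∞) × ℝ → ℝ solve the linear equation ∂w/∂t = ∂²w/∂x² − 2 f(x) w with nonnegative initial datum w(0,·) = w₀ ≥ 0, w₀ ∈ L¹(ℝ), with the regularity and decay guaranteed by parabolic theory (w(t,·), ∂w/∂x(t,·) integrable and vanishing at ±∞, ‖w(s,·)‖_{L¹} > 0, locally uniform bounds in t). Then for every t ∈ (0,T): −∫ℝ w(t,x) h(x) dx ≤ ( ∫₀ᵗ 1/‖w(s,·)‖_{L¹(ℝ)} ds )⁻¹. -/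

import Mathlib

open MeasureTheory Filter
open scoped ENNReal NNReal

open Set in
/-- One-sided differentiation under the integral sign: a one-sided bound on the increments is
enough for a lower bound on the right slopes. -/
theorem eventually_lt_slope_integral {X : Type*} [MeasurableSpace X] {μ : Measure X}
    {H : ℝ → X → ℝ} {H' G : X → ℝ} {s b : ℝ} (hsb : s < b)
    (hint : ∀ r ∈ Ico s b, Integrable (H r) μ)
    (hder : ∀ x, HasDerivAt (fun r => H r x) (H' x) s)
    (hH' : Integrable H' μ) (hG : Integrable G μ)
    (hlow : ∀ r ∈ Ioo s b, ∀ᵐ x ∂μ, -((r - s) * G x) ≤ H r x - H s x)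
    {c : ℝ} (hc : c < ∫ x, H' x ∂μ) :
    ∀ᶠ r in nhdsWithin s (Ioi s), c < slope (fun r => ∫ x, H r x ∂μ) s r := by
  have hev : ∀ᶠ r in nhdsWithin s (Ioi s), r ∈ Ioo s b := Ioo_mem_nhdsGT hsb
  have hq : ∀ r ∈ Ioo s b, Integrable (fun x => slope (fun r => H r x) s r) μ := by
    intro r hr
    simp only [slope_def_field]
    exact ((hint r ⟨hr.1.le, hr.2⟩).sub (hint s ⟨le_rfl, hsb⟩)).div_const _
  have hlim : Tendsto (fun r => ∫ x, min (slope (fun r => H r x) s r) (H' x) ∂μ)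
      (nhdsWithin s (Ioi s)) (nhds (∫ x, H' x ∂μ)) := by
    refine tendsto_integral_filter_of_dominated_convergence (fun x => |G x| + |H' x|) ?_ ?_ ?_ ?_
    · filter_upwards [hev] with r hr
      exact ((hq r hr).inf hH').aestronglyMeasurable
    · filter_upwards [hev] with r hr
      filter_upwards [hlow r hr] with x hx
      have h0 : 0 < r - s := sub_pos.2 hr.1
      have h1 : -G x ≤ slope (fun r => H r x) s r := by
        rw [slope_def_field, le_div_iff₀ h0]; linarith
      rw [Real.norm_eq_abs, abs_le]
      have := neg_abs_le (H' x)
      have := le_abs_self (H' x)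
      have := le_abs_self (G x)
      have := abs_nonneg (G x)
      have := abs_nonneg (H' x)
      constructor
      · apply le_min <;> linarith
      · exact (min_le_right _ _).trans (by linarith)
    · exact hG.abs.add hH'.abs
    · refine ae_of_all _ fun x => ?_
      have h1 : Tendsto (slope (fun r => H r x) s) (nhdsWithin s (Ioi s)) (nhds (H' x)) :=
        (hasDerivAt_iff_tendsto_slope.1 (hder x)).mono_left
          (nhdsWithin_mono s fun r (hr : s < r) => hr.ne')
      simpa using h1.min (tendsto_const_nhds (x := H' x))
  filter_upwards [hev, hlim.eventually (lt_mem_nhds hc)] with r hr h1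
  refine h1.trans_le ?_
  have : slope (fun r => ∫ x, H r x ∂μ) s r = ∫ x, slope (fun r => H r x) s r ∂μ := by
    simp only [slope_def_field]
    rw [integral_div, integral_sub (hint r ⟨hr.1.le, hr.2⟩) (hint s ⟨le_rfl, hsb⟩)]
  rw [this]
  exact integral_mono ((hq r hr).inf hH') (hq r hr) fun x => min_le_left _ _

/-- The truncated powers `x ↦ (max x 0) ^ (n + 2)` are continuously differentiable. -/
theorem hasDerivAt_max_zero_pow (n : ℕ) (x : ℝ) :
    HasDerivAt (fun r : ℝ => max r 0 ^ (n + 2)) ((n + 2) * max x 0 ^ (n + 1)) x := by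
  rcases lt_trichotomy x 0 with hx | rfl | hx
  · rw [max_eq_right hx.le]
    have : (fun r : ℝ => max r 0 ^ (n + 2)) =ᶠ[nhds x] fun _ => 0 := by
      filter_upwards [gt_mem_nhds hx] with r hr
      simp [max_eq_right hr.le]
    simpa using (hasDerivAt_const x (0 : ℝ)).congr_of_eventuallyEq this
  · rw [hasDerivAt_iff_isLittleO_nhds_zero]
    simp only [max_self, zero_add]
    have h1 : (fun h : ℝ => max h 0 ^ (n + 2)) =O[nhds 0] fun h => h ^ (n + 2) := by
      refine Asymptotics.IsBigO.of_bound 1 (Eventually.of_forall fun h => ?_)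
      rw [one_mul, norm_pow, norm_pow]
      gcongr
      simp only [Real.norm_eq_abs]
      rcases le_total h 0 with h0 | h0 <;> simp [h0]
    have h2 : (fun h : ℝ => h ^ (n + 2)) =o[nhds 0] fun h => h :=
      Asymptotics.isLittleO_pow_id (by lia)
    simpa using h1.trans_isLittleO h2
  · rw [max_eq_left hx.le]
    have : (fun r : ℝ => max r 0 ^ (n + 2)) =ᶠ[nhds x] fun r => r ^ (n + 2) := by
      filter_upwards [lt_mem_nhds hx] with r hr
      simp [max_eq_left hr.le]
    simpa using (hasDerivAt_pow (n + 2) x).congr_of_eventuallyEq this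

/-- A nonnegative `C²` function lies above a family of tangent parabolas of common opening which
are nonpositive far away. -/
theorem exists_tangent_parabola_le {y : ℝ → ℝ} (hy : ContDiff ℝ 2 y) (h0 : ∀ x, 0 ≤ y x)
    {R' R : ℝ} (hR : R' < R) :
    ∃ M : ℝ, 0 ≤ M ∧ ∀ x₀, |x₀| ≤ R' →
      (∀ x, y x₀ + deriv y x₀ * (x - x₀) - M * (x - x₀) ^ 2 ≤ y x) ∧
      (∀ x, R ≤ |x| → y x₀ + deriv y x₀ * (x - x₀) - M * (x - x₀) ^ 2 ≤ 0) := by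
  have hd : Differentiable ℝ y := hy.differentiable (by norm_num)
  have hy1 : ContDiff ℝ 1 (deriv y) := by
    have : ContDiff ℝ (1 + 1) y := by simpa [one_add_one_eq_two] using hy
    exact (contDiff_succ_iff_deriv.1 this).2.2
  have hd1 : Differentiable ℝ (deriv y) := hy1.differentiable (by norm_num)
  obtain ⟨A, hA⟩ := (isCompact_Icc (a := -R) (b := R)).exists_bound_of_continuousOn
    hy.continuous.continuousOn
  obtain ⟨B, hB⟩ := (isCompact_Icc (a := -R) (b := R)).exists_bound_of_continuousOn
    hy1.continuous.continuousOn
  obtain ⟨D, hD⟩ := (isCompact_Icc (a := -R) (b := R)).exists_bound_of_continuousOn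
    (hy1.continuous_deriv (by norm_num)).continuousOn
  have hk : 0 < R - R' := sub_pos.2 hR
  have hM : 0 ≤ |A| / (R - R') ^ 2 + |B| / (R - R') := by positivity
  refine ⟨|A| / (R - R') ^ 2 + |B| / (R - R') + |D|, by positivity, fun x₀ hx₀ => ?_⟩
  have hx₀R : x₀ ∈ Set.Icc (-R) R := by
    have := abs_le.1 hx₀; constructor <;> linarith
  have far : ∀ x, R ≤ |x| → y x₀ + deriv y x₀ * (x - x₀) -
      (|A| / (R - R') ^ 2 + |B| / (R - R') + |D|) * (x - x₀) ^ 2 ≤ 0 := by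
    intro x hx
    have h1 : R - R' ≤ |x - x₀| := by
      have := abs_sub_abs_le_abs_sub x x₀; linarith
    have h2 : y x₀ ≤ |A| := ((le_abs_self _).trans (hA x₀ hx₀R)).trans (le_abs_self A)
    have h3 : deriv y x₀ * (x - x₀) ≤ |B| * |x - x₀| := by
      refine (le_abs_self _).trans ?_
      rw [abs_mul]
      exact mul_le_mul_of_nonneg_right ((hB x₀ hx₀R).trans (le_abs_self B)) (abs_nonneg _)
    have h4 : |A| ≤ |A| / (R - R') ^ 2 * (x - x₀) ^ 2 := by
      rw [← sq_abs (x - x₀), div_mul_eq_mul_div, le_div_iff₀ (by positivity)]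
      gcongr
    have h5 : |B| * |x - x₀| ≤ |B| / (R - R') * (x - x₀) ^ 2 := by
      rw [← sq_abs (x - x₀), div_mul_eq_mul_div, le_div_iff₀ (by positivity), mul_assoc]
      gcongr
      nlinarith [abs_nonneg (x - x₀)]
    have h6 : 0 ≤ |D| * (x - x₀) ^ 2 := by positivity
    linarith
  refine ⟨fun x => ?_, far⟩
  rcases le_total R |x| with hx | hx
  · exact (far x hx).trans (h0 x)
  have hxR : x ∈ Set.Icc (-R) R := abs_le.1 hx
  have hsub : Set.uIcc x₀ x ⊆ Set.Icc (-R) R := Set.uIcc_subset_Icc hx₀R hxR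
  have hlip : ∀ z ∈ Set.uIcc x₀ x, |deriv y z - deriv y x₀| ≤ |D| * |x - x₀| := by
    intro z hz
    have := (convex_Icc (-R) R).norm_image_sub_le_of_norm_deriv_le
      (fun p _ => hd1 p) (fun p hp => (hD p hp).trans (le_abs_self D)) hx₀R (hsub hz)
    refine this.trans ?_
    gcongr
    exact Set.abs_sub_left_of_mem_uIcc hz
  have hφ : ∀ z, HasDerivAt (fun z => y z - deriv y x₀ * (z - x₀))
      (deriv y z - deriv y x₀) z := by
    intro z
    simpa using (hd z).hasDerivAt.fun_sub (((hasDerivAt_id z).sub_const x₀).const_mul (deriv y x₀))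
  have key := (convex_uIcc x₀ x).norm_image_sub_le_of_norm_hasDerivWithin_le
    (fun z _ => (hφ z).hasDerivWithinAt) hlip Set.left_mem_uIcc Set.right_mem_uIcc
  rw [Real.norm_eq_abs, Real.norm_eq_abs, mul_assoc, ← sq, sq_abs] at key
  have h7 := (abs_le.1 key).1
  have h8 : 0 ≤ (|A| / (R - R') ^ 2 + |B| / (R - R')) * (x - x₀) ^ 2 := by positivity
  simp only [sub_self, mul_zero, sub_zero] at h7
  linarith

/-- Fencing: a function whose right slopes dominate the derivative of `B` stays above `B`. -/
theorem le_of_eventually_lt_slope {Φ B l : ℝ → ℝ} {a b : ℝ}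
    (hΦ : ContinuousOn Φ (Set.Icc a b)) (hB : ContinuousOn B (Set.Icc a b)) (hab : B a ≤ Φ a)
    (hB' : ∀ s ∈ Set.Ico a b, HasDerivWithinAt B (l s) (Set.Ici s) s)
    (hslope : ∀ s ∈ Set.Ico a b, ∀ c < l s,
      ∀ᶠ r in nhdsWithin s (Set.Ioi s), c < slope Φ s r) :
    ∀ s ∈ Set.Icc a b, B s ≤ Φ s := by
  have := image_le_of_liminf_slope_right_le_deriv_boundary (f := fun s => -Φ s)
    (B := fun s => -B s) (B' := fun s => -l s) hΦ.neg (neg_le_neg hab) hB.neg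
    (fun s hs => (hB' s hs).neg) ?_
  · exact fun s hs => neg_le_neg_iff.1 (this hs)
  · intro s hs r hr
    refine ((hslope s hs (-r) (by linarith)).mono fun z hz => ?_).frequently
    have h1 : slope (fun s => -Φ s) s z = -slope Φ s z := by
      simp only [slope_def_field]; ring
    rw [h1]; linarith

/-- `y` is nonnegative and satisfies `∂y/∂t ≥ ∂²y/∂x²` on `[a, b] × ℝ`, with time derivative `d`.
Only regularity in each variable separately is required. -/
structure IsSupercaloricOn (y d : ℝ → ℝ → ℝ) (a b : ℝ) : Prop where
  nonneg : ∀ s ∈ Set.Icc a b, ∀ x, 0 ≤ y s x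
  contDiff : ∀ s ∈ Set.Icc a b, ContDiff ℝ 2 (y s)
  hasDerivAt : ∀ s ∈ Set.Icc a b, ∀ x, HasDerivAt (fun r => y r x) (d s x) s
  continuous_deriv : ∀ s ∈ Set.Icc a b, Continuous (d s)
  le_deriv : ∀ s ∈ Set.Icc a b, ∀ x, deriv (deriv (y s)) x ≤ d s x

/-- Every caloric parabola which is nonpositive outside `(-R, R)` and below `y` at time `α` is
below `y` at time `β`. -/
def ParabolaLE (R : ℝ) (y : ℝ → ℝ → ℝ) (α β : ℝ) : Prop :=
  ∀ A B M : ℝ, 0 ≤ M → (∀ x, R ≤ |x| → A + B * x - M * x ^ 2 ≤ 0) →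
    (∀ x, A + B * x - M * x ^ 2 ≤ y α x) →
    ∀ x, A + B * x - M * x ^ 2 - 2 * M * (β - α) ≤ y β x

namespace ParabolaLE

variable {R : ℝ} {y : ℝ → ℝ → ℝ} {α β γ : ℝ}

theorem refl : ParabolaLE R y α α := by
  intro A B M _ _ h x
  simpa using h x

theorem trans (hαβ : α ≤ β) (h₁ : ParabolaLE R y α β) (h₂ : ParabolaLE R y β γ) :
    ParabolaLE R y α γ := by
  intro A B M hM hout hq x
  have hpos : 0 ≤ 2 * M * (β - α) := mul_nonneg (by linarith) (sub_nonneg.2 hαβ)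
  have := h₂ (A - 2 * M * (β - α)) B M hM (fun x hx => by linarith [hout x hx])
    (fun x => by linarith [h₁ A B M hM hout hq x]) x
  linarith

theorem of_tendsto {ι : Type*} {l : Filter ι} [l.NeBot] {u : ι → ℝ}
    (hu : Tendsto u l (nhds β)) (hy : ∀ x, Tendsto (fun i => y (u i) x) l (nhds (y β x)))
    (h : ∀ᶠ i in l, ParabolaLE R y α (u i)) : ParabolaLE R y α β := by
  intro A B M hM hout hq x
  refine le_of_tendsto_of_tendsto (f := fun i => A + B * x - M * x ^ 2 - 2 * M * (u i - α)) ?_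
    (hy x) (h.mono fun i hi => hi A B M hM hout hq x)
  exact ((hu.sub_const α).const_mul _).const_sub _

/-- Linear-in-time lower bound extracted from comparison with tangent parabolas. -/
theorem exists_lower_bound (hy : ContDiff ℝ 2 (y α)) (h0 : ∀ x, 0 ≤ y α x)
    {R' : ℝ} (hR : R' < R) :
    ∃ C : ℝ, 0 ≤ C ∧ ∀ β, ParabolaLE R y α β →
      ∀ x, |x| ≤ R' → y α x - C * (β - α) ≤ y β x := by
  obtain ⟨M, hM, H⟩ := exists_tangent_parabola_le hy h0 hR
  refine ⟨2 * M, by linarith, fun β hβ x₀ hx₀ => ?_⟩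
  obtain ⟨h1, h2⟩ := H x₀ hx₀
  have key := hβ (y α x₀ - deriv (y α) x₀ * x₀ - M * x₀ ^ 2)
    (deriv (y α) x₀ + 2 * M * x₀) M hM (fun x hx => by linarith [h2 x hx])
    (fun x => by linarith [h1 x]) x₀
  linarith

end ParabolaLE

theorem deriv_contDiff_one {g : ℝ → ℝ} (hg : ContDiff ℝ 2 g) : ContDiff ℝ 1 (deriv g) := by
  have : ContDiff ℝ (1 + 1) g := by simpa [one_add_one_eq_two] using hg
  exact (contDiff_succ_iff_deriv.1 this).2.2

theorem deriv_deriv_sub_parabola {g : ℝ → ℝ} (hg : ContDiff ℝ 2 g) (A B M c x : ℝ) :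
    deriv (deriv fun x => g x - (A + B * x - M * x ^ 2) + c) x = deriv (deriv g) x + 2 * M := by
  have e1 : (deriv fun x => g x - (A + B * x - M * x ^ 2) + c) =
      fun x => deriv g x - (B - 2 * M * x) := by
    funext x
    have h2 := ((hg.differentiable (by norm_num)) x).hasDerivAt
    have h3 : HasDerivAt (fun x => A + B * x - M * x ^ 2) (B - 2 * M * x) x := by
      have := (((hasDerivAt_id x).const_mul B).const_add A).fun_sub
        ((hasDerivAt_pow 2 x).const_mul M)
      refine this.congr_deriv ?_
      simp; ring
    exact ((h2.fun_sub h3).add_const _).deriv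
  rw [e1]
  have h2 := (((deriv_contDiff_one hg).differentiable (by norm_num)) x).hasDerivAt
  have h3 : HasDerivAt (fun x => B - 2 * M * x) (-(2 * M)) x := by
    simpa using ((hasDerivAt_id x).const_mul (2 * M)).const_sub B
  rw [(h2.fun_sub h3).deriv]
  ring

/-- Energy inequality: the truncation of a `C²` function positive at the ends of an interval. -/
theorem integral_negPart_sq_mul_deriv2_nonneg {g : ℝ → ℝ} (hg : ContDiff ℝ 2 g) {a b : ℝ}
    (hab : a ≤ b) (ha : 0 ≤ g a) (hb : 0 ≤ g b) :
    0 ≤ ∫ x in a..b, max (-g x) 0 ^ 2 * deriv (deriv g) x := by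
  have hg1 := deriv_contDiff_one hg
  have hc := hg.continuous
  have hc1 := hg1.continuous
  have hc2 : Continuous (deriv (deriv g)) := hg1.continuous_deriv (by norm_num)
  have hd : ∀ x, HasDerivAt (fun x => max (-g x) 0 ^ 2 * deriv g x)
      (max (-g x) 0 ^ 2 * deriv (deriv g) x - 2 * max (-g x) 0 * deriv g x ^ 2) x := by
    intro x
    have h1 := (hasDerivAt_max_zero_pow 0 (-g x)).comp x
      ((hg.differentiable (by norm_num)) x).hasDerivAt.fun_neg
    have h2 := h1.mul ((hg1.differentiable (by norm_num)) x).hasDerivAt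
    refine h2.congr_deriv ?_
    simp
    ring
  have h1 := intervalIntegral.integral_eq_sub_of_hasDerivAt (a := a) (b := b)
    (fun x _ => hd x) (Continuous.intervalIntegrable (by fun_prop) _ _)
  rw [max_eq_right (neg_nonpos.2 ha), max_eq_right (neg_nonpos.2 hb),
    intervalIntegral.integral_sub (Continuous.intervalIntegrable (by fun_prop) _ _)
      (Continuous.intervalIntegrable (by fun_prop) _ _)] at h1
  have h2 : 0 ≤ ∫ x in a..b, 2 * max (-g x) 0 * deriv g x ^ 2 :=
    intervalIntegral.integral_nonneg hab fun x _ => by positivity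
  simp at h1
  linarith

open Set in
/-- Comparison with parabolas on the compact subintervals of `(α, β)` extends to the left end. -/
theorem IsSupercaloricOn.parabolaLE_of_Ioo {y d : ℝ → ℝ → ℝ} {α β R : ℝ} (hR : 0 < R)
    (h : IsSupercaloricOn y d α β) (hαβ : α < β)
    (hgood : ∀ α' ∈ Ioo α β, ∀ β' ∈ Ico α' β, ParabolaLE R y α' β') :
    ParabolaLE R y α β := by
  have hcont : ∀ x, ContinuousOn (fun r => y r x) (Icc α β) := fun x r hr =>
    (h.hasDerivAt r hr x).continuousAt.continuousWithinAt
  suffices H : ∀ s ∈ Ioo α β, ParabolaLE R y α s by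
    have hβ : β ∈ Icc α β := ⟨hαβ.le, le_rfl⟩
    refine ParabolaLE.of_tendsto (l := nhdsWithin β (Iio β)) (u := id)
      (tendsto_id.mono_left nhdsWithin_le_nhds)
      (fun x => (h.hasDerivAt β hβ x).continuousAt.tendsto.mono_left nhdsWithin_le_nhds) ?_
    filter_upwards [Ioo_mem_nhdsLT hαβ] with s hs using H s hs
  intro s hs A B M hM hout hq x
  have hsub : Icc α s ⊆ Icc α β := Icc_subset_Icc_right hs.2.le
  refine le_of_forall_pos_le_add fun ε hε => ?_
  set q : ℝ → ℝ := fun x => A + B * x - M * x ^ 2 with hqdef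
  have hqc : Continuous q := by fun_prop
  set ζ : ℝ → ℝ → ℝ := fun r x => y r x - q x + 2 * M * (r - α) + ε with hζ
  have hM' : ∀ r ∈ Icc α β, 0 ≤ 2 * M * (r - α) := fun r hr =>
    mul_nonneg (by linarith) (sub_nonneg.2 hr.1)
  have hζout : ∀ r ∈ Icc α β, ∀ x, q x ≤ ε → 0 ≤ ζ r x := fun r hr x hx => by
    have := h.nonneg r hr x
    have := hM' r hr
    simp only [hζ]; linarith
  rcases le_total R |x| with hx | hx
  · have := hout x hx
    have := h.nonneg s (hsub ⟨hs.1.le, le_rfl⟩) x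
    have := hM' s (hsub ⟨hs.1.le, le_rfl⟩)
    linarith
  -- the region where the parabola exceeds `ε` is compactly contained in `(-R, R)`
  obtain ⟨R', hR', hball⟩ := exists_lt_subset_ball (x := (0 : ℝ)) (r := R)
    (isClosed_le continuous_const hqc : IsClosed {x | ε ≤ q x}) (by
      intro x hx
      by_contra hcon
      have := hout x (by simpa using hcon)
      exact absurd (lt_of_lt_of_le hε hx) (not_lt.2 this))
  have hneg : ∀ r ∈ Icc α β, ∀ x, ζ r x < 0 → |x| ≤ R' := by
    intro r hr x hx
    have : ε ≤ q x := by
      by_contra hcon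
      exact absurd (hζout r hr x (not_le.1 hcon).le) (not_le.2 hx)
    have := hball this
    simp at this
    exact this.le
  set μ := (volume : Measure ℝ).restrict (Ioc (-R) R) with hμ
  have hfin : ∀ g : ℝ → ℝ, Continuous g → Integrable g μ := fun g hg =>
    (hg.integrableOn_Icc (a := -R) (b := R)).mono_set Ioc_subset_Icc_self
  have hζc2 : ∀ r ∈ Icc α β, ContDiff ℝ 2 (ζ r) := by
    intro r hr
    have := h.contDiff r hr
    simp only [hζ, hqdef]
    fun_prop
  have hζc : ∀ r ∈ Icc α β, Continuous (ζ r) := fun r hr => (hζc2 r hr).continuous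
  set p : ℝ → ℝ → ℝ := fun r x => max (-ζ r x) 0 with hp
  have hp0 : ∀ r x, 0 ≤ p r x := fun r x => le_max_right _ _
  have hpc : ∀ r ∈ Icc α β, Continuous (p r) := by
    intro r hr
    have := hζc r hr
    simp only [hp]; fun_prop
  have hpq : ∀ r ∈ Icc α β, ∀ x, p r x ≤ |q x| := by
    intro r hr x
    have h1 := h.nonneg r hr x
    have h2 := hM' r hr
    have h3 := le_abs_self (q x)
    refine max_le ?_ (abs_nonneg _)
    simp only [hζ]; linarith
  set Φ : ℝ → ℝ := fun r => ∫ x, -(p r x ^ 3) ∂μ with hΦ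
  have hΦc : ContinuousOn Φ (Icc α s) := by
    refine continuousOn_of_dominated (bound := fun x => |q x| ^ 3) ?_ ?_ (hfin _ (by fun_prop)) ?_
    · intro r hr
      have := hpc r (hsub hr)
      exact (hfin _ (by fun_prop)).aestronglyMeasurable
    · intro r hr
      refine ae_of_all _ fun x => ?_
      rw [norm_neg, norm_pow, Real.norm_of_nonneg (hp0 r x)]
      have := hpq r (hsub hr) x
      have := hp0 r x
      gcongr
    · refine ae_of_all _ fun x => ?_
      have := (hcont x).mono hsub
      simp only [hp, hζ]; fun_prop
  have hΦα : Φ α = 0 := by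
    have : ∀ x, p α x = 0 := fun x => by
      have := hq x
      refine max_eq_right ?_
      simp only [hζ, hqdef, sub_self, mul_zero]; linarith
    simp [hΦ, this]
  have hder : ∀ r ∈ Ioo α β, ∀ x, HasDerivAt (fun r => -(p r x ^ 3))
      (3 * (p r x ^ 2 * (d r x + 2 * M))) r := by
    intro r hr x
    have h1 : HasDerivAt (fun r => ζ r x) (d r x + 2 * M) r := by
      have h2 := (h.hasDerivAt r (Ioo_subset_Icc_self hr) x).sub_const (q x)
      have h3 := (((hasDerivAt_id r).sub_const α).const_mul (2 * M))
      simpa [hζ] using (h2.fun_add h3).add_const ε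
    have h4 := ((hasDerivAt_max_zero_pow 1 (-ζ r x)).comp r h1.fun_neg).fun_neg
    refine h4.congr_deriv ?_
    simp only [hp]
    push_cast
    ring
  have hslope : ∀ r ∈ Ioo α s, ∀ c < (0 : ℝ),
      ∀ᶠ r' in nhdsWithin r (Ioi r), c < slope Φ r r' := by
    intro r hr c hc
    have hrβ : r ∈ Ioo α β := ⟨hr.1, hr.2.trans hs.2⟩
    have hrI : r ∈ Icc α β := Ioo_subset_Icc_self hrβ
    obtain ⟨C, hC, hlow⟩ := ParabolaLE.exists_lower_bound (h.contDiff r hrI) (h.nonneg r hrI) hR'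
    have hpr := hpc r hrI
    have hdr := h.continuous_deriv r hrI
    refine eventually_lt_slope_integral (b := β) (G := fun x => 3 * C * |q x| ^ 2) hrβ.2 ?_
      (hder r hrβ) (hfin _ (by fun_prop)) (hfin _ (by fun_prop)) ?_ (hc.trans_le ?_)
    · intro r' hr'
      have := hpc r' ⟨hr.1.le.trans hr'.1, hr'.2.le⟩
      exact hfin _ (by fun_prop)
    · intro r' hr'
      have hr'I : r' ∈ Icc α β := ⟨hr.1.le.trans hr'.1.le, hr'.2.le⟩
      have hd0 : 0 ≤ r' - r := (sub_pos.2 hr'.1).le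
      refine ae_of_all _ fun x => ?_
      have hinc : p r' x ≤ p r x + C * (r' - r) := by
        rcases le_or_gt 0 (ζ r' x) with h0 | h0
        · have : p r' x = 0 := max_eq_right (by linarith)
          rw [this]
          have := hp0 r x
          positivity
        · have h1 := hlow r' (hgood r hrβ r' ⟨hr'.1.le, hr'.2⟩) x (hneg r' hr'I x h0)
          have h2 : p r' x = -ζ r' x := max_eq_left (by linarith)
          have h3 : -ζ r x ≤ p r x := le_max_left _ _
          have h4 : 0 ≤ 2 * M * (r' - r) := by positivity
          rw [h2]
          simp only [hζ] at h3 ⊢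
          linarith
      have ha := hp0 r x
      have hb := hp0 r' x
      have ha' := hpq r hrI x
      have hb' := hpq r' hr'I x
      have hS : p r' x ^ 2 + p r' x * p r x + p r x ^ 2 ≤ 3 * |q x| ^ 2 := by
        nlinarith [mul_le_mul hb' hb' hb (abs_nonneg _), mul_le_mul ha' ha' ha (abs_nonneg _),
          mul_le_mul hb' ha' ha (abs_nonneg _)]
      have hS0 : 0 ≤ p r' x ^ 2 + p r' x * p r x + p r x ^ 2 := by positivity
      have h5 : (p r' x - p r x) * (p r' x ^ 2 + p r' x * p r x + p r x ^ 2) ≤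
          C * (r' - r) * (3 * |q x| ^ 2) :=
        mul_le_mul (by linarith) hS hS0 (by positivity)
      nlinarith [h5]
    · have hζr := hζc2 r hrI
      have hends : ∀ x, |x| = R → 0 ≤ ζ r x := fun x hx =>
        hζout r hrI x ((hout x hx.ge).trans hε.le)
      have h1 := integral_negPart_sq_mul_deriv2_nonneg hζr (a := -R) (b := R) (by linarith)
        (hends _ (by rw [abs_neg, abs_of_pos hR])) (hends _ (abs_of_pos hR))
      rw [intervalIntegral.integral_of_le (by linarith)] at h1
      have hc2 : Continuous (deriv (deriv (ζ r))) :=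
        (deriv_contDiff_one hζr).continuous_deriv (by norm_num)
      have hyr := h.contDiff r hrI
      have hder2 : ∀ x, deriv (deriv (ζ r)) x = deriv (deriv (y r)) x + 2 * M := by
        intro x
        rw [← deriv_deriv_sub_parabola hyr A B M (2 * M * (r - α) + ε)]
        simp only [hζ, hqdef, add_assoc]
      refine h1.trans ?_
      calc ∫ x in Ioc (-R) R, max (-ζ r x) 0 ^ 2 * deriv (deriv (ζ r)) x
          ≤ ∫ x in Ioc (-R) R, p r x ^ 2 * (d r x + 2 * M) := by
            refine integral_mono (hfin _ (by fun_prop)) (hfin _ (by fun_prop)) fun x => ?_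
            have := h.le_deriv r hrI x
            simp only [hder2]
            have := sq_nonneg (p r x)
            simp only [hp] at this ⊢
            gcongr
        _ ≤ ∫ x in Ioc (-R) R, 3 * (p r x ^ 2 * (d r x + 2 * M)) := by
            have h2 : 0 ≤ ∫ x in Ioc (-R) R, p r x ^ 2 * (d r x + 2 * M) := by
              refine h1.trans (integral_mono (hfin _ (by fun_prop)) (hfin _ (by fun_prop))
                fun x => ?_)
              have := h.le_deriv r hrI x
              simp only [hder2]
              have := sq_nonneg (p r x)
              simp only [hp] at this ⊢
              gcongr
            rw [integral_const_mul]
            linarith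
  have hmono : ∀ r ∈ Ioo α s, Φ r ≤ Φ s := by
    intro r hr
    exact le_of_eventually_lt_slope (B := fun _ => Φ r) (l := fun _ => 0)
      (hΦc.mono (Icc_subset_Icc_left hr.1.le)) continuousOn_const le_rfl
      (fun _ _ => hasDerivWithinAt_const _ _ _)
      (fun r' hr' => hslope r' ⟨hr.1.trans_le hr'.1, hr'.2⟩) s ⟨hr.2.le, le_rfl⟩
  have hΦs : 0 ≤ Φ s := by
    rw [← hΦα]
    have ht : Tendsto Φ (nhdsWithin α (Ioi α)) (nhds (Φ α)) :=
      ((hΦc α ⟨le_rfl, hs.1.le⟩).mono_of_mem_nhdsWithin (Icc_mem_nhdsGT hs.1)).tendsto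
    refine le_of_tendsto ht ?_
    filter_upwards [Ioo_mem_nhdsGT hs.1] with r hr using hmono r hr
  have hsI : s ∈ Icc α β := Ioo_subset_Icc_self hs
  have hps := hpc s hsI
  have hzero : ∫ x in (-R)..R, p s x ^ 3 = 0 := by
    rw [intervalIntegral.integral_of_le (by linarith)]
    have h1 : Φ s = -∫ x in Ioc (-R) R, p s x ^ 3 := by simp only [hΦ, integral_neg, hμ]
    have h2 : 0 ≤ ∫ x in Ioc (-R) R, p s x ^ 3 :=
      integral_nonneg fun x => pow_nonneg (hp0 s x) 3
    linarith
  have hpx : p s x = 0 := by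
    by_contra hne
    have hpos : 0 < p s x := lt_of_le_of_ne (hp0 s x) (Ne.symm hne)
    have := intervalIntegral.integral_pos (a := -R) (b := R) (f := fun x => p s x ^ 3)
      (by linarith) (by fun_prop) (fun x _ => pow_nonneg (hp0 s x) 3)
      ⟨x, abs_le.1 hx, by positivity⟩
    linarith
  have h6 : -ζ s x ≤ p s x := le_max_left _ _
  rw [hpx] at h6
  simp only [hζ, hqdef] at h6
  linarith

theorem IsSupercaloricOn.mono {y d : ℝ → ℝ → ℝ} {a b a' b' : ℝ} (h : IsSupercaloricOn y d a b)
    (ha : a ≤ a') (hb : b' ≤ b) : IsSupercaloricOn y d a' b' := by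
  have hsub : Set.Icc a' b' ⊆ Set.Icc a b := Set.Icc_subset_Icc ha hb
  exact ⟨fun s hs => h.nonneg s (hsub hs), fun s hs => h.contDiff s (hsub hs),
    fun s hs => h.hasDerivAt s (hsub hs), fun s hs => h.continuous_deriv s (hsub hs),
    fun s hs => h.le_deriv s (hsub hs)⟩

theorem IsLocalMin.deriv_deriv_nonneg {g : ℝ → ℝ} {x : ℝ} (h : IsLocalMin g x)
    (hc : ContinuousAt g x) : 0 ≤ deriv (deriv g) x := by
  by_contra! hneg
  have hmax := isLocalMax_of_deriv_deriv_neg hneg h.deriv_eq_zero hc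
  have heq : g =ᶠ[nhds x] fun _ => g x := by
    filter_upwards [h, hmax] with z h1 h2 using le_antisymm h2 h1
  have h1 : deriv g =ᶠ[nhds x] fun _ => 0 := by simpa using heq.deriv
  rw [h1.deriv_eq] at hneg
  simp at hneg

open Set in
/-- Propagation of the comparison with parabolas along a closed set of times on which the
functions `y s` are uniformly Lipschitz, when comparison holds across its gaps. -/
theorem IsSupercaloricOn.parabolaLE_of_lipschitz {y d : ℝ → ℝ → ℝ} {α β R : ℝ} {n : ℝ≥0}
    (h : IsSupercaloricOn y d α β) {E : Set ℝ} (hE : IsClosed E)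
    (hαE : α ∈ E) (hβE : β ∈ E)
    (hlip : ∀ s ∈ E ∩ Icc α β, LipschitzOnWith n (y s) (Icc (-R) R))
    (hgap : ∀ s ∈ Icc α β, ∀ s' ∈ Icc α β, s < s' → Disjoint (Ioo s s') E →
      ParabolaLE R y s s') (hαβ : α ≤ β) :
    ParabolaLE R y α β := by
  intro A B M hM hout hq x
  set q : ℝ → ℝ := fun x => A + B * x - M * x ^ 2 with hqdef
  suffices H : ∀ ε > 0, ∀ s ∈ E ∩ Icc α β, ∀ x ∈ Icc (-R) R,
      0 < y s x - q x + (2 * M + ε) * (s - α) + ε by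
    rcases le_or_gt |x| R with hx | hx
    · have hlim : Tendsto (fun ε : ℝ => y β x - q x + (2 * M + ε) * (β - α) + ε)
          (nhdsWithin 0 (Ioi 0)) (nhds (y β x - q x + (2 * M + 0) * (β - α) + 0)) := by
        refine Tendsto.mono_left (Continuous.tendsto ?_ 0) nhdsWithin_le_nhds
        fun_prop
      have := ge_of_tendsto hlim (b := 0) (by
        filter_upwards [self_mem_nhdsWithin] with ε hε
        exact (H ε hε β ⟨hβE, hαβ, le_rfl⟩ x (abs_le.1 hx)).le)
      simp only [hqdef] at this ⊢
      linarith
    · have h1 := hout x hx.le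
      have h2 := h.nonneg β ⟨hαβ, le_rfl⟩ x
      have h3 : 0 ≤ 2 * M * (β - α) := mul_nonneg (by linarith) (sub_nonneg.2 hαβ)
      linarith
  intro ε hε
  set ζ : ℝ → ℝ → ℝ := fun s x => y s x - q x + (2 * M + ε) * (s - α) + ε with hζ
  have hζα : ∀ x, 0 < ζ α x := fun x => by
    have := hq x
    simp only [hζ, hqdef, sub_self, mul_zero]; linarith
  have hζout : ∀ s ∈ Icc α β, ∀ x, R ≤ |x| → 0 < ζ s x := fun s hs x hx => by
    have h1 := hout x hx
    have h2 := h.nonneg s hs x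
    have h3 : 0 ≤ (2 * M + ε) * (s - α) := mul_nonneg (by linarith) (sub_nonneg.2 hs.1)
    simp only [hζ, hqdef]; linarith
  by_contra! hcon
  obtain ⟨s₀, hs₀, x₀, hx₀, hle⟩ := hcon
  have hycont : ContinuousOn (fun z : ℝ × ℝ => y z.2 z.1) (Icc (-R) R ×ˢ (E ∩ Icc α β)) :=
    continuousOn_prod_of_continuousOn_lipschitzOnWith _ n
      (fun x _ s hs => (h.hasDerivAt s hs.2 x).continuousAt.continuousWithinAt)
      (fun s hs => hlip s hs)
  have hζcont : ContinuousOn (fun z : ℝ × ℝ => ζ z.2 z.1) (Icc (-R) R ×ˢ (E ∩ Icc α β)) := by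
    have h1 : Continuous fun z : ℝ × ℝ => q z.1 := by fun_prop
    have h2 : Continuous fun z : ℝ × ℝ => (2 * M + ε) * (z.2 - α) := by fun_prop
    exact ((hycont.sub h1.continuousOn).add h2.continuousOn).add continuousOn_const
  have hcomp : IsCompact (Icc (-R) R ×ˢ (E ∩ Icc α β)) :=
    isCompact_Icc.prod (isCompact_Icc.inter_left hE)
  have hScomp : IsCompact
      ((Icc (-R) R ×ˢ (E ∩ Icc α β)) ∩ (fun z : ℝ × ℝ => ζ z.2 z.1) ⁻¹' Iic 0) :=
    hcomp.of_isClosed_subset (hζcont.preimage_isClosed_of_isClosed hcomp.isClosed isClosed_Iic)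
      inter_subset_left
  obtain ⟨⟨x₁, s₁⟩, ⟨⟨hx₁, hs₁⟩, hz₁⟩, hmin⟩ := hScomp.exists_isMinOn
    ⟨(x₀, s₀), ⟨hx₀, hs₀⟩, hle⟩ continuous_snd.continuousOn
  simp only [mem_preimage, mem_Iic] at hz₁ hx₁ hs₁
  have hbefore : ∀ s ∈ E ∩ Ico α s₁, ∀ x, 0 < ζ s x := by
    intro s hs x
    have hsI : s ∈ Icc α β := ⟨hs.2.1, hs.2.2.le.trans hs₁.2.2⟩
    rcases le_or_gt |x| R with hx | hx
    · by_contra! h0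
      have := hmin (show (x, s) ∈ _ from ⟨⟨abs_le.1 hx, hs.1, hsI⟩, h0⟩)
      exact absurd hs.2.2 (not_lt.2 this)
    · exact hζout s hsI x hx.le
  have hα₁ : α < s₁ := by
    refine lt_of_le_of_ne hs₁.2.1 fun heq => ?_
    subst heq
    exact absurd (hζα x₁) (not_lt.2 hz₁)
  have hne : (E ∩ Ico α s₁).Nonempty := ⟨α, hαE, le_rfl, hα₁⟩
  have hbdd : BddAbove (E ∩ Ico α s₁) := ⟨s₁, fun s hs => hs.2.2.le⟩
  have hcl := csSup_mem_closure hne hbdd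
  have hle₁ : sSup (E ∩ Ico α s₁) ≤ s₁ := csSup_le hne fun s hs => hs.2.2.le
  have hge : α ≤ sSup (E ∩ Ico α s₁) := le_csSup hbdd ⟨hαE, le_rfl, hα₁⟩
  rcases hle₁.lt_or_eq with hlt | heq
  · set a' := sSup (E ∩ Ico α s₁) with ha'
    have ha'E : a' ∈ E := (hE.closure_subset_iff.2 inter_subset_left) hcl
    have hrel := hgap a' ⟨hge, hle₁.trans hs₁.2.2⟩ s₁ hs₁.2 hlt (by
      rw [Set.disjoint_left]
      intro s hs hsE
      have := le_csSup hbdd (show s ∈ E ∩ Ico α s₁ from ⟨hsE, hge.trans hs.1.le, hs.2⟩)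
      exact absurd hs.1 (not_lt.2 this))
    have h0 : 0 ≤ (2 * M + ε) * (a' - α) := mul_nonneg (by linarith) (sub_nonneg.2 hge)
    have h1 := hrel (A - (2 * M + ε) * (a' - α) - ε) B M hM
      (fun x hx => by linarith [hout x hx]) (fun x => by
        have := hbefore a' ⟨ha'E, hge, hlt⟩ x
        simp only [hζ, hqdef] at this
        linarith) x₁
    have h2 : 0 < ε * (s₁ - a') := mul_pos hε (sub_pos.2 hlt)
    simp only [hζ, hqdef] at hz₁
    linarith
  · rw [heq] at hcl
    have hfreq : ∃ᶠ s in nhdsWithin s₁ (Iio s₁), s ∈ E ∩ Ico α s₁ := by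
      rw [mem_closure_iff_frequently] at hcl
      refine (frequently_nhdsWithin_iff.2 (hcl.mono fun s hs => ⟨hs, hs.2.2⟩))
    have hζt : ∀ x, HasDerivAt (fun s => ζ s x) (d s₁ x + (2 * M + ε)) s₁ := by
      intro x
      have h2 := (h.hasDerivAt s₁ hs₁.2 x).sub_const (q x)
      have h3 := (((hasDerivAt_id s₁).sub_const α).const_mul (2 * M + ε))
      simpa [hζ] using (h2.fun_add h3).add_const ε
    have hnonneg : ∀ x, 0 ≤ ζ s₁ x := by
      intro x
      by_contra! h0
      have := ((hζt x).continuousAt.tendsto.mono_left (nhdsWithin_le_nhds (s := Iio s₁))).eventually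
        (gt_mem_nhds h0)
      obtain ⟨s, hs, hs'⟩ := (hfreq.and_eventually this).exists
      exact absurd (hbefore s hs x) (not_lt.2 hs'.le)
    have hC2 := h.contDiff s₁ hs₁.2
    have hloc : IsLocalMin (ζ s₁) x₁ := Eventually.of_forall fun x => hz₁.trans (hnonneg x)
    have hd2 := hloc.deriv_deriv_nonneg (by
      have := hC2.continuous
      simp only [hζ, hqdef]; fun_prop)
    have hd2' : deriv (deriv (ζ s₁)) x₁ = deriv (deriv (y s₁)) x₁ + 2 * M := by
      rw [← deriv_deriv_sub_parabola hC2 A B M ((2 * M + ε) * (s₁ - α) + ε)]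
      simp only [hζ, hqdef, add_assoc]
    have hdpos : 0 < d s₁ x₁ + (2 * M + ε) := by
      have := h.le_deriv s₁ hs₁.2 x₁
      linarith
    have hsl : Tendsto (slope (fun s => ζ s x₁) s₁) (nhdsWithin s₁ (Iio s₁))
        (nhds (d s₁ x₁ + (2 * M + ε))) :=
      (hasDerivAt_iff_tendsto_slope.1 (hζt x₁)).mono_left
        (nhdsWithin_mono s₁ fun r (hr : r < s₁) => hr.ne)
    obtain ⟨s, hs, hs'⟩ := (hfreq.and_eventually (hsl.eventually (lt_mem_nhds hdpos))).exists
    rw [slope_def_field] at hs'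
    have h1 := hbefore s hs x₁
    have h2 : (ζ s x₁ - ζ s₁ x₁) / (s - s₁) ≤ 0 :=
      div_nonpos_of_nonneg_of_nonpos (by linarith) (sub_nonpos.2 hs.2.2.le)
    linarith

open Set in
/-- Comparison principle: a nonnegative supersolution of the heat equation, regular in each
variable separately, stays above the caloric parabolas below it. -/
theorem IsSupercaloricOn.parabolaLE {y d : ℝ → ℝ → ℝ} {a b R : ℝ} (hR : 0 < R)
    (h : IsSupercaloricOn y d a b) (hab : a ≤ b) : ParabolaLE R y a b := by
  -- times with no neighbourhood on which the comparison holds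
  set E : Set ℝ := {s | s ∈ Icc a b ∧ ∀ δ > 0, ∃ α β, a ≤ α ∧ α ≤ β ∧ β ≤ b ∧
    |α - s| < δ ∧ |β - s| < δ ∧ ¬ParabolaLE R y α β} with hEdef
  have hE : IsClosed E := by
    rw [← closure_subset_iff_isClosed]
    intro s hs
    refine ⟨closure_minimal (fun r hr => hr.1) isClosed_Icc hs, fun δ hδ => ?_⟩
    obtain ⟨r, hr, hrs⟩ := Metric.mem_closure_iff.1 hs (δ / 2) (by positivity)
    obtain ⟨α, β, h1, h2, h3, h4, h5, h6⟩ := hr.2 (δ / 2) (by positivity)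
    rw [dist_comm, Real.dist_eq] at hrs
    refine ⟨α, β, h1, h2, h3, ?_, ?_, h6⟩
    · have := abs_sub_le α r s; linarith
    · have := abs_sub_le β r s; linarith
  have hgap : ∀ s ∈ Icc a b, ∀ s' ∈ Icc a b, s < s' → Disjoint (Ioo s s') E →
      ParabolaLE R y s s' := by
    intro s hs s' hs' hlt hdisj
    refine (h.mono hs.1 hs'.2).parabolaLE_of_Ioo hR hlt fun α hα β hβ => ?_
    have hclosed : IsClosed ({r | ParabolaLE R y α r} ∩ Icc α β) := by
      rw [← closure_subset_iff_isClosed]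
      intro r hr
      have hrI : r ∈ Icc α β := closure_minimal inter_subset_right isClosed_Icc hr
      refine ⟨?_, hrI⟩
      have : (nhdsWithin r ({r | ParabolaLE R y α r} ∩ Icc α β)).NeBot :=
        mem_closure_iff_nhdsWithin_neBot.1 hr
      have hrab : r ∈ Icc a b :=
        ⟨hs.1.trans (hα.1.le.trans hrI.1), hrI.2.trans (hβ.2.le.trans hs'.2)⟩
      refine ParabolaLE.of_tendsto (u := id)
        (l := nhdsWithin r ({r | ParabolaLE R y α r} ∩ Icc α β))
        (tendsto_id.mono_left nhdsWithin_le_nhds)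
        (fun x => (h.hasDerivAt r hrab x).continuousAt.tendsto.mono_left nhdsWithin_le_nhds) ?_
      filter_upwards [self_mem_nhdsWithin] with r' hr' using hr'.1
    have := hclosed.Icc_subset_of_forall_exists_gt (a := α) (b := β) ParabolaLE.refl ?_
    · exact this ⟨hβ.1, le_rfl⟩
    · intro r hr r' hr'
      have hrI : r ∈ Ioo s s' := ⟨hα.1.trans_le hr.2.1, hr.2.2.trans hβ.2⟩
      have hrE : r ∉ E := Set.disjoint_left.1 hdisj hrI
      have hrab : r ∈ Icc a b := ⟨hs.1.trans hrI.1.le, hrI.2.le.trans hs'.2⟩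
      simp only [hEdef, mem_ofPred_eq, not_and] at hrE
      have := hrE hrab
      push Not at this
      obtain ⟨δ, hδ, hgood⟩ := this
      have hlt' : r < min (min r' β) (r + δ / 2) :=
        lt_min (lt_min hr' hr.2.2) (by linarith)
      have hle1 : min (min r' β) (r + δ / 2) ≤ β := (min_le_left _ _).trans (min_le_right _ _)
      refine ⟨min (min r' β) (r + δ / 2), ⟨?_, ?_⟩⟩
      · refine ParabolaLE.trans hr.2.1 hr.1 (hgood _ _ hrab.1 hlt'.le
          (hle1.trans (hβ.2.le.trans hs'.2)) (by simpa using hδ) ?_)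
        rw [abs_of_pos (sub_pos.2 hlt')]
        have := min_le_right (min r' β) (r + δ / 2)
        linarith
      · exact ⟨hlt', (min_le_left _ _).trans (min_le_left _ _)⟩
  have hgap' : ∀ s ∈ Icc a b, ∀ s' ∈ Icc a b, s ≤ s' → Disjoint (Ioo s s') E →
      ParabolaLE R y s s' := by
    intro s hs s' hs' hle hdisj
    rcases hle.lt_or_eq with hlt | rfl
    · exact hgap s hs s' hs' hlt hdisj
    · exact ParabolaLE.refl
  rcases E.eq_empty_or_nonempty with hemp | hne
  · exact hgap' a ⟨le_rfl, hab⟩ b ⟨hab, le_rfl⟩ hab (by simp [hemp])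
  exfalso
  have : Nonempty E := hne.to_subtype
  have : CompleteSpace E := hE.completeSpace_coe
  have hcontE : ∀ x, Continuous fun s : E => y s x := fun x =>
    continuous_iff_continuousAt.2 fun s =>
      (h.hasDerivAt s s.2.1 x).continuousAt.comp continuous_subtype_val.continuousAt
  obtain ⟨n, hn⟩ := nonempty_interior_of_iUnion_of_closed
    (f := fun n : ℕ => {s : E | LipschitzOnWith n (y s) (Icc (-R) R)})
    (fun n => by
      simp only [lipschitzOnWith_iff_dist_le_mul, ofPred_forall]
      refine isClosed_iInter fun x => isClosed_iInter fun _ => isClosed_iInter fun x' =>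
        isClosed_iInter fun _ => isClosed_le ((hcontE x).dist (hcontE x')) continuous_const)
    (by
      refine eq_univ_of_forall fun s => mem_iUnion.2 ?_
      have hC := h.contDiff s s.2.1
      obtain ⟨D, hD⟩ := (isCompact_Icc (a := -R) (b := R)).exists_bound_of_continuousOn
        (deriv_contDiff_one hC).continuous.continuousOn
      obtain ⟨n, hn⟩ := exists_nat_ge D
      refine ⟨n, ?_⟩
      refine (convex_Icc (-R) R).lipschitzOnWith_of_nnnorm_deriv_le
        (fun x _ => (hC.differentiable (by norm_num)) x) fun x hx => ?_
      rw [← NNReal.coe_le_coe]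
      exact_mod_cast (hD x hx).trans hn)
  obtain ⟨⟨s, hsE⟩, hs⟩ := hn
  obtain ⟨δ, hδ, hball⟩ := Metric.isOpen_iff.1 isOpen_interior _ hs
  have hlip : ∀ r ∈ E, |r - s| < δ → LipschitzOnWith n (y r) (Icc (-R) R) := fun r hr hrs =>
    interior_subset (hball (show (⟨r, hr⟩ : E) ∈ Metric.ball ⟨s, hsE⟩ δ from hrs))
  obtain ⟨α, β, hα, hαβ, hβ, hαs, hβs, hnot⟩ := hsE.2 δ hδ
  apply hnot
  have hsub : Icc α β ⊆ Icc a b := Icc_subset_Icc hα hβ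
  rcases (E ∩ Icc α β).eq_empty_or_nonempty with hemp | hne'
  · refine hgap' α (hsub ⟨le_rfl, hαβ⟩) β (hsub ⟨hαβ, le_rfl⟩) hαβ ?_
    rw [Set.disjoint_left]
    intro r hr hrE
    exact (Set.mem_empty_iff_false r).1 (hemp ▸ ⟨hrE, Ioo_subset_Icc_self hr⟩)
  have hK : IsCompact (E ∩ Icc α β) := isCompact_Icc.inter_left hE
  obtain ⟨α₁, hα₁, hmin⟩ := hK.exists_isLeast hne'
  obtain ⟨β₁, hβ₁, hmax⟩ := hK.exists_isGreatest hne'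
  have h1 : ParabolaLE R y α α₁ := by
    refine hgap' α (hsub ⟨le_rfl, hαβ⟩) α₁ (hsub hα₁.2) hα₁.2.1 ?_
    rw [Set.disjoint_left]
    intro r hr hrE
    exact absurd hr.2 (not_lt.2 (hmin ⟨hrE, hr.1.le, hr.2.le.trans hα₁.2.2⟩))
  have h3 : ParabolaLE R y β₁ β := by
    refine hgap' β₁ (hsub hβ₁.2) β (hsub ⟨hαβ, le_rfl⟩) hβ₁.2.2 ?_
    rw [Set.disjoint_left]
    intro r hr hrE
    exact absurd hr.1 (not_lt.2 (hmax ⟨hrE, hβ₁.2.1.trans hr.1.le, hr.2.le⟩))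
  have hsub₁ : Icc α₁ β₁ ⊆ Icc a b := (Icc_subset_Icc hα₁.2.1 hβ₁.2.2).trans hsub
  have h2 : ParabolaLE R y α₁ β₁ := by
    refine (h.mono (hsub hα₁.2).1 (hsub hβ₁.2).2).parabolaLE_of_lipschitz hE hα₁.1 hβ₁.1
      (n := n) ?_ (fun r hr r' hr' => hgap r (hsub₁ hr) r' (hsub₁ hr')) (hmin hβ₁)
    intro r hr
    refine hlip r hr.1 ?_
    rw [abs_lt] at hαs hβs ⊢
    have := hα₁.2.1
    have := hβ₁.2.2
    constructor <;> linarith [hr.2.1, hr.2.2]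
  exact ParabolaLE.trans hα₁.2.1 h1 (ParabolaLE.trans (hmin hβ₁) h2 h3)

/-- A nonnegative supersolution of the heat equation decreases at most linearly in time, locally
uniformly in space. -/
theorem IsSupercaloricOn.exists_lower_bound {y d : ℝ → ℝ → ℝ} {a b : ℝ}
    (h : IsSupercaloricOn y d a b) (hab : a ≤ b) {R : ℝ} (hR : 0 < R) :
    ∃ C : ℝ, 0 ≤ C ∧ ∀ s ∈ Set.Icc a b, ∀ x, |x| ≤ R → y a x - C * (s - a) ≤ y s x := by
  have ha : a ∈ Set.Icc a b := ⟨le_rfl, hab⟩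
  obtain ⟨C, hC, H⟩ := ParabolaLE.exists_lower_bound (R := R + 1) (h.contDiff a ha)
    (h.nonneg a ha) (lt_add_one R)
  exact ⟨C, hC, fun s hs => H s ((h.mono le_rfl hs.2).parabolaLE (by linarith) hs.1)⟩

theorem HasDerivAt.div_one_add_mul {g : ℝ → ℝ} {g' s ε : ℝ} (hg : HasDerivAt g g' s)
    (h : 0 < 1 + ε * g s) :
    HasDerivAt (fun r => g r / (1 + ε * g r)) (g' / (1 + ε * g s) ^ 2) s := by
  refine (hg.fun_div ((hg.const_mul ε).const_add 1) h.ne').congr_deriv ?_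
  congr 1
  ring

theorem ContDiff.div_one_add_mul {v : ℝ → ℝ} (hv : ContDiff ℝ 2 v) {ε : ℝ}
    (h : ∀ x, 0 < 1 + ε * v x) : ContDiff ℝ 2 fun x => v x / (1 + ε * v x) :=
  hv.div (contDiff_const.add (contDiff_const.mul hv)) fun x => (h x).ne'

theorem deriv_deriv_div_one_add_mul_le {v : ℝ → ℝ} (hv : ContDiff ℝ 2 v) {ε : ℝ} (hε : 0 ≤ ε)
    (h : ∀ x, 0 < 1 + ε * v x) (x : ℝ) :
    deriv (deriv fun x => v x / (1 + ε * v x)) x ≤ deriv (deriv v) x / (1 + ε * v x) ^ 2 := by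
  have hd : ∀ x, HasDerivAt v (deriv v x) x := fun x =>
    (hv.differentiable (by norm_num) x).hasDerivAt
  have e1 : (deriv fun x => v x / (1 + ε * v x)) = fun x => deriv v x / (1 + ε * v x) ^ 2 :=
    funext fun x => ((hd x).div_one_add_mul (h x)).deriv
  have h2 := (((deriv_contDiff_one hv).differentiable (by norm_num)) x).hasDerivAt
  have h3 := h2.fun_div ((((hd x).const_mul ε).const_add 1).fun_pow 2) (pow_pos (h x) 2).ne'
  rw [e1, h3.deriv, div_le_div_iff₀ (by have := h x; positivity) (by have := h x; positivity)]
  have hp := h x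
  set p := 1 + ε * v x
  have : 0 ≤ deriv v x * (2 * p * (ε * deriv v x)) * p ^ 2 := by
    have : deriv v x * (2 * p * (ε * deriv v x)) * p ^ 2 =
      2 * p * ε * p ^ 2 * (deriv v x) ^ 2 := by ring
    rw [this]; positivity
  norm_num
  nlinarith

/-- `z` is a nonnegative supersolution of `∂z/∂t = ∂²z/∂x² - 2 f z + z²` on `[0, T) × ℝ`, with time
derivative `d`, and bounded by `K`. -/
structure IsBoundedSupersolution (f : ℝ → ℝ) (z d : ℝ → ℝ → ℝ) (K T : ℝ) : Prop where
  nonneg : ∀ s ∈ Set.Ico 0 T, ∀ x, 0 ≤ z s x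
  le : ∀ s ∈ Set.Ico 0 T, ∀ x, z s x ≤ K
  contDiff : ∀ s ∈ Set.Ico 0 T, ContDiff ℝ 2 (z s)
  hasDerivAt : ∀ s ∈ Set.Ico 0 T, ∀ x, HasDerivAt (fun r => z r x) (d s x) s
  continuous_deriv : ∀ s ∈ Set.Ico 0 T, Continuous (d s)
  le_deriv : ∀ s ∈ Set.Ico 0 T, ∀ x,
    deriv (deriv (z s)) x - 2 * f x * z s x + z s x ^ 2 ≤ d s x

/-- Truncating a nonpositive solution `u` of `∂u/∂t = ∂²u/∂x² - 2 f u - u²` gives a bounded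
supersolution. -/
theorem isBoundedSupersolution_truncation {f : ℝ → ℝ} {u : ℝ → ℝ → ℝ} {T ε : ℝ}
    (hf : Continuous f) (hf_nonneg : ∀ x, 0 ≤ f x) (hε : 0 < ε)
    (hu_eq : ∀ s ∈ Set.Ico (0 : ℝ) T, ∀ x : ℝ, HasDerivAt (fun τ => u τ x)
      (deriv (deriv (u s)) x - 2 * f x * u s x - (u s x) ^ 2) s)
    (hu_reg : ∀ s ∈ Set.Ico (0 : ℝ) T, ContDiff ℝ 2 (u s))
    (hu_nonpos : ∀ s ∈ Set.Ico (0 : ℝ) T, ∀ x, u s x ≤ 0) :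
    IsBoundedSupersolution f (fun s x => -u s x / (1 + ε * -u s x))
      (fun s x => -(deriv (deriv (u s)) x - 2 * f x * u s x - (u s x) ^ 2) /
        (1 + ε * -u s x) ^ 2) ε⁻¹ T := by
  have hv : ∀ s ∈ Set.Ico (0 : ℝ) T, ∀ x, 0 ≤ -u s x := fun s hs x => by
    linarith [hu_nonpos s hs x]
  have hp : ∀ s ∈ Set.Ico (0 : ℝ) T, ∀ x, 0 < 1 + ε * -u s x := fun s hs x => by
    have := mul_nonneg hε.le (hv s hs x); linarith
  refine ⟨fun s hs x => div_nonneg (hv s hs x) (hp s hs x).le, fun s hs x => ?_,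
    fun s hs => (hu_reg s hs).neg.div_one_add_mul (hp s hs),
    fun s hs x => (hu_eq s hs x).fun_neg.div_one_add_mul (hp s hs x), fun s hs => ?_,
    fun s hs x => ?_⟩
  · rw [div_le_iff₀ (hp s hs x), mul_add, inv_mul_cancel_left₀ hε.ne']
    have := inv_pos.2 hε
    linarith
  · have h1 := (hu_reg s hs).continuous
    have h2 := (deriv_contDiff_one (hu_reg s hs)).continuous_deriv (by norm_num)
    exact Continuous.div (by fun_prop) (by fun_prop) fun x => (pow_pos (hp s hs x) 2).ne'
  · have h1 := deriv_deriv_div_one_add_mul_le (hu_reg s hs).neg hε.le (hp s hs) x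
    have e : deriv (deriv (-u s)) x = - deriv (deriv (u s)) x := by
      rw [show deriv (-u s) = -deriv (u s) from funext fun x => deriv.neg]
      exact deriv.neg
    have h1' : deriv (deriv fun x => -u s x / (1 + ε * -u s x)) x ≤
        -deriv (deriv (u s)) x / (1 + ε * -u s x) ^ 2 := by
      rw [← e]; exact h1
    have h2 : -u s x / (1 + ε * -u s x) ^ 2 ≤ -u s x / (1 + ε * -u s x) := by
      refine div_le_div_of_nonneg_left (hv s hs x) (hp s hs x) ?_
      have := mul_nonneg hε.le (hv s hs x)
      nlinarith
    have h3 := mul_le_mul_of_nonneg_left h2 (mul_nonneg zero_le_two (hf_nonneg x))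
    have h4 : -(deriv (deriv (u s)) x - 2 * f x * u s x - u s x ^ 2) / (1 + ε * -u s x) ^ 2 =
        -deriv (deriv (u s)) x / (1 + ε * -u s x) ^ 2
          - 2 * f x * (-u s x / (1 + ε * -u s x) ^ 2) + (-u s x / (1 + ε * -u s x)) ^ 2 := by
      rw [div_pow]; ring
    linarith

theorem IsBoundedSupersolution.exists_lower_bound {f : ℝ → ℝ} {z d : ℝ → ℝ → ℝ} {K T F : ℝ}
    (h : IsBoundedSupersolution f z d K T) (hF : ∀ x, f x ≤ F) (hF0 : 0 ≤ F) {s b : ℝ}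
    (hs : 0 ≤ s) (hsb : s ≤ b) (hb : b < T) {R : ℝ} (hR : 0 < R) :
    ∃ C : ℝ, 0 ≤ C ∧ ∀ r ∈ Set.Icc s b, ∀ x, |x| ≤ R → -((r - s) * C) ≤ z r x - z s x := by
  have hsub : ∀ r ∈ Set.Icc s b, r ∈ Set.Ico 0 T := fun r hr =>
    ⟨hs.trans hr.1, hr.2.trans_lt hb⟩
  have hK : 0 ≤ K := (h.nonneg s (hsub s ⟨le_rfl, hsb⟩) 0).trans
    (h.le s (hsub s ⟨le_rfl, hsb⟩) 0)
  have hsc : IsSupercaloricOn (fun r x => Real.exp (2 * F * (r - s)) * z r x)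
      (fun r x => Real.exp (2 * F * (r - s)) * (2 * F) * z r x +
        Real.exp (2 * F * (r - s)) * d r x) s b := by
    refine ⟨fun r hr x => mul_nonneg (Real.exp_nonneg _) (h.nonneg r (hsub r hr) x),
      fun r hr => contDiff_const.mul (h.contDiff r (hsub r hr)), fun r hr x => ?_,
      fun r hr => ?_, fun r hr x => ?_⟩
    · have h1 : HasDerivAt (fun r => Real.exp (2 * F * (r - s)))
          (Real.exp (2 * F * (r - s)) * (2 * F)) r := by
        simpa using (((hasDerivAt_id r).sub_const s).const_mul (2 * F)).exp
      exact h1.fun_mul (h.hasDerivAt r (hsub r hr) x)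
    · have h1 := h.continuous_deriv r (hsub r hr)
      have h2 := (h.contDiff r (hsub r hr)).continuous
      fun_prop
    · have e1 : (deriv fun x => Real.exp (2 * F * (r - s)) * z r x) =
          fun x => Real.exp (2 * F * (r - s)) * deriv (z r) x :=
        funext fun x => deriv_const_mul_field _
      rw [e1, deriv_const_mul_field, mul_assoc (Real.exp _), ← mul_add]
      refine mul_le_mul_of_nonneg_left ?_ (Real.exp_nonneg _)
      have h1 := h.le_deriv r (hsub r hr) x
      have h2 := mul_le_mul_of_nonneg_right (hF x) (h.nonneg r (hsub r hr) x)
      nlinarith [sq_nonneg (z r x)]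
  obtain ⟨C, hC, H⟩ := hsc.exists_lower_bound hsb hR
  refine ⟨C + K * (2 * F * Real.exp (2 * F * (b - s))), by positivity, fun r hr x hx => ?_⟩
  have h1 := H r hr x hx
  simp only [sub_self, mul_zero, Real.exp_zero, one_mul] at h1
  set a := 2 * F * (r - s) with ha
  have ha0 : 0 ≤ a := mul_nonneg (by linarith) (sub_nonneg.2 hr.1)
  have h2 : Real.exp a - 1 ≤ a * Real.exp a := by
    have h3 := Real.add_one_le_exp (-a)
    have h4 : Real.exp (-a) * Real.exp a = 1 := by rw [← Real.exp_add]; simp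
    nlinarith [Real.exp_pos a]
  have h3 : Real.exp a ≤ Real.exp (2 * F * (b - s)) :=
    Real.exp_le_exp.2 (mul_le_mul_of_nonneg_left (by linarith [hr.2]) (by linarith))
  have h4 : Real.exp a - 1 ≤ a * Real.exp (2 * F * (b - s)) :=
    h2.trans (mul_le_mul_of_nonneg_left h3 ha0)
  have h5 : (Real.exp a - 1) * z r x ≤ K * (a * Real.exp (2 * F * (b - s))) := by
    rw [mul_comm]
    refine mul_le_mul (h.le r (hsub r hr) x) h4 ?_ hK
    linarith [Real.add_one_le_exp a]
  have h6 : K * (a * Real.exp (2 * F * (b - s))) =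
      (r - s) * (K * (2 * F * Real.exp (2 * F * (b - s)))) := by rw [ha]; ring
  nlinarith

/-- Green's identity with a compactly supported weight. -/
theorem integral_mul_sub_eq_of_hasCompactSupport {χ p q : ℝ → ℝ} (hχ : ContDiff ℝ 2 χ)
    (hχc : HasCompactSupport χ) (hp : ContDiff ℝ 2 p) (hq : ContDiff ℝ 2 q) :
    ∫ x, χ x * (p x * deriv (deriv q) x - deriv (deriv p) x * q x) =
      ∫ x, (2 * deriv χ x * deriv p x + deriv (deriv χ) x * p x) * q x := by
  have hd : ∀ {g : ℝ → ℝ}, ContDiff ℝ 2 g → ∀ x, HasDerivAt g (deriv g x) x := fun hg x =>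
    (hg.differentiable (by norm_num) x).hasDerivAt
  have hd2 : ∀ {g : ℝ → ℝ}, ContDiff ℝ 2 g → ∀ x, HasDerivAt (deriv g) (deriv (deriv g) x) x :=
    fun hg x => ((deriv_contDiff_one hg).differentiable (by norm_num) x).hasDerivAt
  have hc1 : ∀ {g : ℝ → ℝ}, ContDiff ℝ 2 g → Continuous (deriv g) := fun hg =>
    (deriv_contDiff_one hg).continuous
  have hc2 : ∀ {g : ℝ → ℝ}, ContDiff ℝ 2 g → Continuous (deriv (deriv g)) := fun hg =>
    (deriv_contDiff_one hg).continuous_deriv (by norm_num)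
  have c1 := hχ.continuous
  have c2 := hc1 hχ
  have c3 := hc2 hχ
  have c4 := hp.continuous
  have c5 := hc1 hp
  have c6 := hc2 hp
  have c7 := hq.continuous
  have c8 := hc1 hq
  have c9 := hc2 hq
  have i1 : Integrable fun x => χ x * (p x * deriv (deriv q) x - deriv (deriv p) x * q x) :=
    Continuous.integrable_of_hasCompactSupport (by fun_prop) hχc.mul_right
  have i2 : Integrable fun x =>
      (2 * deriv χ x * deriv p x + deriv (deriv χ) x * p x) * q x := by
    refine Continuous.integrable_of_hasCompactSupport (by fun_prop) (HasCompactSupport.mul_right ?_)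
    exact ((hχc.deriv.mul_left (f := fun _ => 2)).mul_right).add hχc.deriv.deriv.mul_right
  have i3 : Integrable fun x =>
      χ x * (p x * deriv q x - deriv p x * q x) - deriv χ x * (p x * q x) :=
    (Continuous.integrable_of_hasCompactSupport (by fun_prop) hχc.mul_right).sub
      (Continuous.integrable_of_hasCompactSupport (by fun_prop) hχc.deriv.mul_right)
  rw [← sub_eq_zero, ← integral_sub i1 i2]
  refine integral_eq_zero_of_hasDerivAt_of_integrable (fun x => ?_) (i1.sub i2) i3
  refine (((hd hχ x).fun_mul (((hd hp x).fun_mul (hd2 hq x)).fun_sub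
    ((hd2 hp x).fun_mul (hd hq x)))).fun_sub
    ((hd2 hχ x).fun_mul ((hd hp x).fun_mul (hd hq x)))).congr_deriv ?_
  ring

/-- Cauchy–Schwarz inequality with respect to a density. -/
theorem sq_integral_mul_div_le {X : Type*} [MeasurableSpace X] {μ : Measure X} {m z : X → ℝ}
    {L : ℝ} (hm : ∀ x, 0 ≤ m x) (hmi : Integrable m μ) (hmz : Integrable (fun x => m x * z x) μ)
    (hmz2 : Integrable (fun x => m x * z x ^ 2) μ) (hL : 0 < L) (hmL : ∫ x, m x ∂μ ≤ L) :
    (∫ x, m x * z x ∂μ) ^ 2 / L ≤ ∫ x, m x * z x ^ 2 ∂μ := by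
  set P := ∫ x, m x * z x ∂μ
  have h0 : 0 ≤ ∫ x, m x * (z x - P / L) ^ 2 ∂μ :=
    integral_nonneg fun x => mul_nonneg (hm x) (sq_nonneg _)
  have e : ∫ x, m x * (z x - P / L) ^ 2 ∂μ =
      ∫ x, m x * z x ^ 2 ∂μ - 2 * (P / L) * P + (P / L) ^ 2 * ∫ x, m x ∂μ := by
    rw [← integral_const_mul, ← integral_const_mul, ← integral_sub hmz2 (hmz.const_mul _),
      ← integral_add (by exact hmz2.sub (hmz.const_mul _)) (hmi.const_mul _)]
    congr 1
    funext x
    ring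
  have h1 : (P / L) ^ 2 * ∫ x, m x ∂μ ≤ (P / L) ^ 2 * L :=
    mul_le_mul_of_nonneg_left hmL (sq_nonneg _)
  have h2 : (P / L) ^ 2 * L = P ^ 2 / L := by field_simp
  have h3 : P / L * P = P ^ 2 / L := by ring
  nlinarith

/-- If `φ` vanishes at infinity and its derivative is dominated by `G`, then `φ` is small where
the tail of `G` is small. -/
theorem abs_le_setIntegral_of_abs_deriv_le {φ φ' G : ℝ → ℝ} (hφ : ∀ x, HasDerivAt φ (φ' x) x)
    (hφ' : Continuous φ') (hG : Integrable G) (hle : ∀ x, |φ' x| ≤ G x)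
    (hlim : Tendsto φ (cocompact ℝ) (nhds 0)) {R x : ℝ} (hx : R ≤ |x|) :
    |φ x| ≤ ∫ y in {y | R ≤ |y|}, G y := by
  have hi : Integrable φ' := hG.mono' hφ'.aestronglyMeasurable (Eventually.of_forall hle)
  rw [cocompact_eq_atBot_atTop] at hlim
  have key : ∀ S : Set ℝ, S ⊆ {y : ℝ | R ≤ |y|} →
      |∫ y in S, φ' y| ≤ ∫ y in {y | R ≤ |y|}, G y := by
    intro S hS
    refine (norm_integral_le_of_norm_le (f := φ') hG.integrableOn (Eventually.of_forall hle)).trans ?_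
    exact setIntegral_mono_set hG.integrableOn
      (Eventually.of_forall fun y => (abs_nonneg _).trans (hle y)) hS.eventuallyLE
  rcases le_abs.1 hx with h | h
  · have := integral_Ioi_of_hasDerivAt_of_tendsto' (a := x) (fun y _ => hφ y) hi.integrableOn
      (hlim.mono_left le_sup_right)
    have h2 := key (Set.Ioi x) fun y hy => (h.trans (le_of_lt hy)).trans (le_abs_self y)
    rwa [this, zero_sub, abs_neg] at h2
  · have := integral_Iic_of_hasDerivAt_of_tendsto' (a := x) (fun y _ => hφ y) hi.integrableOn
      (hlim.mono_left le_sup_left)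
    have h2 := key (Set.Iic x) fun y hy => (h.trans (neg_le_neg hy)).trans (neg_le_abs y)
    rwa [this, sub_zero] at h2

theorem tendsto_setIntegral_le_abs {G : ℝ → ℝ} (hG : Integrable G) :
    Tendsto (fun n : ℕ => ∫ y in {y | (n : ℝ) ≤ |y|}, G y) atTop (nhds 0) := by
  have h := tendsto_setIntegral_of_antitone (μ := volume) (f := G)
    (s := fun n : ℕ => {y : ℝ | (n : ℝ) ≤ |y|})
    (fun n => measurableSet_le measurable_const measurable_norm)
    (fun m n hmn y (hy : (n : ℝ) ≤ |y|) => le_trans (Nat.cast_le.2 hmn) hy)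
    ⟨0, hG.integrableOn⟩
  have e : ⋂ n : ℕ, {y : ℝ | (n : ℝ) ≤ |y|} = ∅ := by
    refine Set.eq_empty_of_forall_notMem fun y hy => ?_
    obtain ⟨n, hn⟩ := exists_nat_gt |y|
    exact absurd (Set.mem_iInter.1 hy n) (not_le.2 hn)
  simpa [e] using h

/-- Rescaled smooth cutoffs and bounds on their derivatives. -/
theorem exists_cutoff : ∃ A : ℝ, 0 ≤ A ∧ ∀ R : ℝ, 1 ≤ R → ∃ χ : ℝ → ℝ, ContDiff ℝ 2 χ ∧
    HasCompactSupport χ ∧ (∀ x, 0 ≤ χ x ∧ χ x ≤ 1) ∧ (∀ x, |x| ≤ R → χ x = 1) ∧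
    (∀ x, |x| < R → deriv χ x = 0) ∧ ∫ x, |deriv χ x| ≤ A ∧
    ∀ x, |deriv (deriv χ) x| ≤ A / R := by
  let φ : ContDiffBump (0 : ℝ) := ⟨1, 2, one_pos, one_lt_two⟩
  have hφ : ContDiff ℝ 2 φ := φ.contDiff
  obtain ⟨K, hK⟩ := (φ.hasCompactSupport.deriv.deriv).exists_bound_of_continuous
    ((deriv_contDiff_one hφ).continuous_deriv (by norm_num))
  have hK0 : 0 ≤ K := (norm_nonneg _).trans (hK 0)
  have hI0 : 0 ≤ ∫ x, |deriv φ x| := integral_nonneg fun x => abs_nonneg _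
  refine ⟨(∫ x, |deriv φ x|) + K, by positivity, fun R hR => ?_⟩
  have hR0 : 0 < R := by linarith
  have hd : ∀ x, HasDerivAt (fun x => φ (x / R)) (deriv φ (x / R) / R) x := fun x => by
    have h1 := (hφ.differentiable (by norm_num) (x / R)).hasDerivAt
    have h2 := h1.comp x ((hasDerivAt_id x).div_const R)
    simpa [div_eq_mul_inv, Function.comp_def] using h2
  have e1 : (deriv fun x => φ (x / R)) = fun x => deriv φ (x / R) / R :=
    funext fun x => (hd x).deriv
  have hd2 : ∀ x, deriv (deriv fun x => φ (x / R)) x = deriv (deriv φ) (x / R) / R / R :=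
    fun x => by
    rw [e1]
    have h1 := ((deriv_contDiff_one hφ).differentiable (by norm_num) (x / R)).hasDerivAt
    have h2 := (h1.comp x ((hasDerivAt_id x).div_const R)).div_const R
    have h3 := h2.deriv
    simpa [div_eq_mul_inv, Function.comp_def] using h3
  have hone : ∀ x, |x| ≤ R → φ (x / R) = 1 := fun x hx => by
    apply φ.one_of_mem_closedBall
    rw [mem_closedBall_zero_iff, Real.norm_eq_abs, abs_div, abs_of_pos hR0]
    exact (div_le_one hR0).2 hx
  refine ⟨fun x => φ (x / R), hφ.comp (contDiff_id.div_const R), ?_,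
    fun x => ⟨φ.nonneg, φ.le_one⟩, hone, fun x hx => ?_, ?_, fun x => ?_⟩
  · have := φ.hasCompactSupport.comp_homeomorph (Homeomorph.mulRight₀ R⁻¹ (inv_ne_zero hR0.ne'))
    simpa [Function.comp_def, div_eq_mul_inv] using this
  · have : (fun x => φ (x / R)) =ᶠ[nhds x] fun _ => 1 := by
      filter_upwards [(isOpen_lt continuous_abs continuous_const).mem_nhds hx] with y hy
      exact hone y (le_of_lt hy)
    rw [this.deriv_eq, deriv_const]
  · rw [e1]
    have e2 : (fun x => |deriv φ (x / R) / R|) = fun x => |deriv φ (x / R)| / R := by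
      funext x; rw [abs_div, abs_of_pos hR0]
    rw [e2, integral_div, Measure.integral_comp_div (fun x => |deriv φ x|) R, abs_of_pos hR0,
      smul_eq_mul, mul_div_cancel_left₀ _ hR0.ne']
    linarith
  · rw [hd2, abs_div, abs_div, abs_of_pos hR0, div_div]
    refine div_le_div₀ (by positivity) ((hK _).trans (by linarith)) hR0 ?_
    nlinarith

/-- `w` is a nonnegative nonzero solution of `∂w/∂t = ∂²w/∂x² - 2 f w` on `(0, t] × ℝ` which is,
together with its time derivative, dominated by the integrable function `g`. -/
structure IsDominatedSolution (f : ℝ → ℝ) (w : ℝ → ℝ → ℝ) (g : ℝ → ℝ) (t : ℝ) : Prop where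
  integrable_bound : Integrable g
  nonneg : ∀ s ∈ Set.Ioc 0 t, ∀ x, 0 ≤ w s x
  contDiff : ∀ s ∈ Set.Ioc 0 t, ContDiff ℝ 2 (w s)
  hasDerivAt : ∀ s ∈ Set.Ioc 0 t, ∀ x,
    HasDerivAt (fun r => w r x) (deriv (deriv (w s)) x - 2 * f x * w s x) s
  le : ∀ s ∈ Set.Ioc 0 t, ∀ x, w s x ≤ g x
  abs_deriv_le : ∀ s ∈ Set.Ioc 0 t, ∀ x, |deriv (deriv (w s)) x - 2 * f x * w s x| ≤ g x
  tendsto_deriv : ∀ s ∈ Set.Ioc 0 t, Tendsto (deriv (w s)) (cocompact ℝ) (nhds 0)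
  pos : ∀ s ∈ Set.Ioc 0 t, 0 < ∫ x, w s x

namespace IsDominatedSolution

variable {f g : ℝ → ℝ} {w : ℝ → ℝ → ℝ} {t : ℝ}

theorem integrable (h : IsDominatedSolution f w g t) {s : ℝ} (hs : s ∈ Set.Ioc 0 t) :
    Integrable (w s) :=
  h.integrable_bound.mono' (h.contDiff s hs).continuous.aestronglyMeasurable
    (Eventually.of_forall fun x => by
      rw [Real.norm_eq_abs, abs_of_nonneg (h.nonneg s hs x)]
      exact h.le s hs x)

theorem abs_sub_le (h : IsDominatedSolution f w g t) {s r : ℝ} (hs : s ∈ Set.Ioc 0 t)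
    (hr : r ∈ Set.Ioc 0 t) (x : ℝ) : |w r x - w s x| ≤ g x * |r - s| :=
  (convex_Ioc 0 t).norm_image_sub_le_of_norm_hasDerivWithin_le (f := fun r => w r x)
    (fun r hr => (h.hasDerivAt r hr x).hasDerivWithinAt)
    (fun r hr => h.abs_deriv_le r hr x) hs hr

theorem continuousOn_integral (h : IsDominatedSolution f w g t) :
    ContinuousOn (fun s => ∫ x, w s x) (Set.Ioc 0 t) := by
  refine continuousOn_of_dominated (bound := g)
    (fun s hs => (h.contDiff s hs).continuous.aestronglyMeasurable)
    (fun s hs => Eventually.of_forall fun x => ?_) h.integrable_bound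
    (Eventually.of_forall fun x s hs => (h.hasDerivAt s hs x).continuousAt.continuousWithinAt)
  rw [Real.norm_eq_abs, abs_of_nonneg (h.nonneg s hs x)]
  exact h.le s hs x

/-- There are cutoffs, equal to `1` on arbitrarily large intervals, whose derivatives contribute
arbitrarily little when integrated against `w`, uniformly in time. -/
theorem exists_cutoff (h : IsDominatedSolution f w g t) {F : ℝ} (hf : ∀ x, 0 ≤ f x)
    (hF : ∀ x, f x ≤ F) (n : ℕ) :
    ∃ χ : ℝ → ℝ, ContDiff ℝ 2 χ ∧ HasCompactSupport χ ∧ (∀ x, 0 ≤ χ x ∧ χ x ≤ 1) ∧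
      (∀ x : ℝ, |x| ≤ n → χ x = 1) ∧ ∀ s ∈ Set.Ioc 0 t,
        ∫ x, |2 * deriv χ x * deriv (w s) x + deriv (deriv χ) x * w s x| ≤ 1 / ((n : ℝ) + 1) := by
  obtain ⟨A, hA, H⟩ := _root_.exists_cutoff
  set G : ℝ → ℝ := fun x => (1 + 2 * F) * g x with hG
  have hGi : Integrable G := h.integrable_bound.const_mul _
  have hwxx : ∀ s ∈ Set.Ioc 0 t, ∀ x, |deriv (deriv (w s)) x| ≤ G x := by
    intro s hs x
    have h1 := h.abs_deriv_le s hs x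
    have h2 := h.le s hs x
    have h3 := h.nonneg s hs x
    have h4 : f x * w s x ≤ F * g x := mul_le_mul (hF x) h2 h3 ((hf x).trans (hF x))
    have h5 := mul_nonneg (hf x) h3
    rw [abs_le] at h1 ⊢
    simp only [hG]
    constructor <;> nlinarith
  set δ : ℝ := 1 / ((n : ℝ) + 1) with hδ
  have hδ0 : 0 < δ := by positivity
  set δ' : ℝ := δ / (4 * A + 1) with hδ'
  have hδ'0 : 0 < δ' := by positivity
  have hlimR : Tendsto (fun m : ℕ => A / (m : ℝ) * ∫ x, g x) atTop (nhds 0) := by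
    simpa using (tendsto_const_div_atTop_nhds_zero_nat A).mul_const (∫ x, g x)
  obtain ⟨m, hm1, hm2, hm3⟩ := (((tendsto_setIntegral_le_abs hGi).eventually
    (gt_mem_nhds hδ'0)).and ((hlimR.eventually (gt_mem_nhds (half_pos hδ0))).and
    (eventually_ge_atTop (max n 1)))).exists
  have hm1' : (1 : ℝ) ≤ m := by exact_mod_cast (le_max_right _ _).trans hm3
  have hmn : (n : ℝ) ≤ m := by exact_mod_cast (le_max_left _ _).trans hm3
  obtain ⟨χ, hχ, hχc, hχ01, hχ1, hχd, hχA, hχ2⟩ := H m hm1'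
  refine ⟨χ, hχ, hχc, hχ01, fun x hx => hχ1 x (hx.trans hmn), fun s hs => ?_⟩
  have c1 : Continuous (deriv χ) := (deriv_contDiff_one hχ).continuous
  have i1 : Integrable fun x => |deriv χ x| :=
    (c1.integrable_of_hasCompactSupport hχc.deriv).abs
  have hle : ∀ x, |2 * deriv χ x * deriv (w s) x + deriv (deriv χ) x * w s x| ≤
      2 * δ' * |deriv χ x| + A / m * g x := by
    intro x
    refine (abs_add_le _ _).trans (add_le_add ?_ ?_)
    · rw [abs_mul, abs_mul, abs_two]
      rcases lt_or_ge |x| m with hx | hx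
      · simp [hχd x hx]
      · have := abs_le_setIntegral_of_abs_deriv_le (fun x => ((deriv_contDiff_one
          (h.contDiff s hs)).differentiable (by norm_num) x).hasDerivAt)
          ((deriv_contDiff_one (h.contDiff s hs)).continuous_deriv (by norm_num)) hGi
          (hwxx s hs) (h.tendsto_deriv s hs) hx
        have h2 : |deriv (w s) x| ≤ δ' := this.trans hm1.le
        have := mul_le_mul_of_nonneg_left h2 (abs_nonneg (deriv χ x))
        linarith
    · rw [abs_mul, abs_of_nonneg (h.nonneg s hs x)]
      exact mul_le_mul (hχ2 x) (h.le s hs x) (h.nonneg s hs x) (by positivity)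
  calc _ ≤ ∫ x, (2 * δ' * |deriv χ x| + A / m * g x) :=
        integral_mono_of_nonneg (Eventually.of_forall fun x => abs_nonneg _)
          ((i1.const_mul _).add (h.integrable_bound.const_mul _)) (Eventually.of_forall hle)
    _ = 2 * δ' * (∫ x, |deriv χ x|) + A / m * ∫ x, g x := by
        rw [integral_add (i1.const_mul _) (h.integrable_bound.const_mul _), integral_const_mul,
          integral_const_mul]
    _ ≤ 2 * δ' * A + δ / 2 := add_le_add (mul_le_mul_of_nonneg_left hχA (by positivity)) hm2.le
    _ ≤ δ := by
        have : δ' * (4 * A + 1) = δ := div_mul_cancel₀ _ (by positivity)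
        nlinarith

end IsDominatedSolution

section Pairing

variable {f g χ : ℝ → ℝ} {w z d : ℝ → ℝ → ℝ} {t T K F : ℝ}

theorem IsBoundedSupersolution.bound_nonneg (hz : IsBoundedSupersolution f z d K T) (hT : 0 < T) :
    0 ≤ K :=
  (hz.nonneg 0 ⟨le_rfl, hT⟩ 0).trans (hz.le 0 ⟨le_rfl, hT⟩ 0)

theorem abs_mul_pairing_le (hw : IsDominatedSolution f w g t)
    (hz : IsBoundedSupersolution f z d K T) (htT : t < T) (hχ : ∀ x, 0 ≤ χ x ∧ χ x ≤ 1) {s : ℝ}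
    (hs : s ∈ Set.Ico 0 t) (x : ℝ) : |χ x * (w (t - s) x * z s x)| ≤ K * g x := by
  have hs' : t - s ∈ Set.Ioc 0 t := ⟨sub_pos.2 hs.2, by linarith [hs.1]⟩
  have hsT : s ∈ Set.Ico 0 T := ⟨hs.1, hs.2.trans htT⟩
  have h1 := hw.nonneg _ hs' x
  have h2 := hz.nonneg s hsT x
  rw [abs_of_nonneg (mul_nonneg (hχ x).1 (mul_nonneg h1 h2))]
  have h3 : w (t - s) x * z s x ≤ g x * K :=
    mul_le_mul (hw.le _ hs' x) (hz.le s hsT x) h2 (h1.trans (hw.le _ hs' x))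
  calc χ x * (w (t - s) x * z s x) ≤ 1 * (w (t - s) x * z s x) :=
        mul_le_mul_of_nonneg_right (hχ x).2 (mul_nonneg h1 h2)
    _ ≤ K * g x := by linarith

theorem continuous_mul_pairing (hw : IsDominatedSolution f w g t)
    (hz : IsBoundedSupersolution f z d K T) (htT : t < T) (hχ : Continuous χ) {s : ℝ}
    (hs : s ∈ Set.Ico 0 t) : Continuous fun x => χ x * (w (t - s) x * z s x) :=
  hχ.mul ((hw.contDiff (t - s) ⟨sub_pos.2 hs.2, by linarith [hs.1]⟩).continuous.mul
    (hz.contDiff s ⟨hs.1, hs.2.trans htT⟩).continuous)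

theorem integrable_mul_pairing (hw : IsDominatedSolution f w g t)
    (hz : IsBoundedSupersolution f z d K T) (htT : t < T) (hχc : Continuous χ)
    (hχ : ∀ x, 0 ≤ χ x ∧ χ x ≤ 1) {s : ℝ} (hs : s ∈ Set.Ico 0 t) :
    Integrable fun x => χ x * (w (t - s) x * z s x) :=
  (hw.integrable_bound.const_mul K).mono'
    (continuous_mul_pairing hw hz htT hχc hs).aestronglyMeasurable
    (Eventually.of_forall (abs_mul_pairing_le hw hz htT hχ hs))

theorem hasDerivAt_mul_pairing (hw : IsDominatedSolution f w g t)
    (hz : IsBoundedSupersolution f z d K T) (htT : t < T) {s : ℝ} (hs : s ∈ Set.Ico 0 t) (x : ℝ) :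
    HasDerivAt (fun r => χ x * (w (t - r) x * z r x))
      (χ x * (-(deriv (deriv (w (t - s))) x - 2 * f x * w (t - s) x) * z s x +
        w (t - s) x * d s x)) s := by
  have hs' : t - s ∈ Set.Ioc 0 t := ⟨sub_pos.2 hs.2, by linarith [hs.1]⟩
  have h1 := (hw.hasDerivAt _ hs' x).comp_const_sub t s
  exact (h1.fun_mul (hz.hasDerivAt s ⟨hs.1, hs.2.trans htT⟩ x)).const_mul (χ x)

theorem continuousOn_integral_mul_pairing (hw : IsDominatedSolution f w g t)
    (hz : IsBoundedSupersolution f z d K T) (htT : t < T) (hχc : Continuous χ)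
    (hχ : ∀ x, 0 ≤ χ x ∧ χ x ≤ 1) :
    ContinuousOn (fun s => ∫ x, χ x * (w (t - s) x * z s x)) (Set.Ico 0 t) :=
  continuousOn_of_dominated (bound := fun x => K * g x)
    (fun _ hs => (continuous_mul_pairing hw hz htT hχc hs).aestronglyMeasurable)
    (fun _ hs => Eventually.of_forall (abs_mul_pairing_le hw hz htT hχ hs))
    (hw.integrable_bound.const_mul K)
    (Eventually.of_forall fun x _ hs =>
      (hasDerivAt_mul_pairing hw hz htT hs x).continuousAt.continuousWithinAt)

/-- Differential inequality for the localized pairing of a bounded supersolution with a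
time-reversed solution of the linearized equation. -/
theorem eventually_lt_slope_pairing (hw : IsDominatedSolution f w g t)
    (hz : IsBoundedSupersolution f z d K T) (htT : t < T) (hf : Continuous f)
    (hF : ∀ x, f x ≤ F) (hF0 : 0 ≤ F) (hχ2 : ContDiff ℝ 2 χ) (hχc : HasCompactSupport χ)
    (hχ : ∀ x, 0 ≤ χ x ∧ χ x ≤ 1) {E : ℝ}
    (hE : ∀ s ∈ Set.Ioc 0 t,
      ∫ x, |2 * deriv χ x * deriv (w s) x + deriv (deriv χ) x * w s x| ≤ E)
    {s : ℝ} (hs : s ∈ Set.Ico 0 t) {c : ℝ}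
    (hc : c < (∫ x, χ x * (w (t - s) x * z s x)) ^ 2 / (∫ x, w (t - s) x) - K * E) :
    ∀ᶠ r in nhdsWithin s (Set.Ioi s),
      c < slope (fun r => ∫ x, χ x * (w (t - r) x * z r x)) s r := by
  have hs' : t - s ∈ Set.Ioc 0 t := ⟨sub_pos.2 hs.2, by linarith [hs.1]⟩
  have hsT : s ∈ Set.Ico 0 T := ⟨hs.1, hs.2.trans htT⟩
  have hK : 0 ≤ K := hz.bound_nonneg (hs.1.trans_lt hsT.2)
  have hg : ∀ x, 0 ≤ g x := fun x => (hw.nonneg _ hs' x).trans (hw.le _ hs' x)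
  have hp := hw.contDiff _ hs'
  have hq := hz.contDiff s hsT
  have cχ := hχ2.continuous
  have cχ1 := (deriv_contDiff_one hχ2).continuous
  have cχ2 : Continuous (deriv (deriv χ)) := (deriv_contDiff_one hχ2).continuous_deriv (by norm_num)
  have cp := hp.continuous
  have cp1 := (deriv_contDiff_one hp).continuous
  have cp2 : Continuous (deriv (deriv (w (t - s)))) :=
    (deriv_contDiff_one hp).continuous_deriv (by norm_num)
  have cq := hq.continuous
  have cq2 : Continuous (deriv (deriv (z s))) :=
    (deriv_contDiff_one hq).continuous_deriv (by norm_num)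
  have cd := hz.continuous_deriv s hsT
  obtain ⟨R, hR0, hR⟩ : ∃ R : ℝ, 0 < R ∧ ∀ x, χ x ≠ 0 → |x| ≤ R := by
    obtain ⟨R, hR⟩ := hχc.isCompact.isBounded.exists_norm_le
    exact ⟨max R 1, by positivity, fun x hx =>
      (hR x (subset_tsupport _ hx)).trans (le_max_left _ _)⟩
  obtain ⟨C, hC, hlow⟩ := hz.exists_lower_bound hF hF0 hs.1 hs.2.le htT hR0
  have iH' : Integrable fun x => χ x * (-(deriv (deriv (w (t - s))) x - 2 * f x * w (t - s) x) *
      z s x + w (t - s) x * d s x) :=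
    Continuous.integrable_of_hasCompactSupport (by fun_prop) hχc.mul_right
  refine eventually_lt_slope_integral (G := fun x => K * g x + C * g x) hs.2
    (fun r hr => integrable_mul_pairing hw hz htT cχ hχ ⟨hs.1.trans hr.1, hr.2⟩)
    (hasDerivAt_mul_pairing hw hz htT hs) iH'
    ((hw.integrable_bound.const_mul K).add (hw.integrable_bound.const_mul C))
    (fun r hr => Eventually.of_forall fun x => ?_) (hc.trans_le ?_)
  · have hrs : 0 ≤ r - s := by linarith [hr.1]
    have hr' : t - r ∈ Set.Ioc 0 t := ⟨sub_pos.2 hr.2, by linarith [hs.1, hr.1]⟩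
    have hrT : r ∈ Set.Ico 0 T := ⟨hs.1.trans hr.1.le, hr.2.trans htT⟩
    by_cases hx : χ x = 0
    · simp only [hx, zero_mul, sub_self, neg_nonpos]
      have := hg x
      positivity
    have h1 := hlow r ⟨hr.1.le, hr.2.le⟩ x (hR x hx)
    have h2 := hw.abs_sub_le hs' hr' x
    rw [show t - r - (t - s) = -(r - s) by ring, abs_neg, abs_of_nonneg hrs] at h2
    have h2' := (abs_le.1 h2).1
    have h3 : -((r - s) * (K * g x)) ≤ (w (t - r) x - w (t - s) x) * z r x := by
      have ha := hz.nonneg r hrT x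
      have hb := mul_le_mul_of_nonneg_right h2' ha
      have hc := mul_le_mul_of_nonneg_left (hz.le r hrT x) (mul_nonneg (hg x) hrs)
      nlinarith
    have h4 : -((r - s) * (C * g x)) ≤ w (t - s) x * (z r x - z s x) := by
      have hb := mul_le_mul_of_nonneg_left h1 (hw.nonneg _ hs' x)
      have hc := mul_le_mul_of_nonneg_right (hw.le _ hs' x) (mul_nonneg hrs hC)
      nlinarith
    have h5 : χ x * (w (t - r) x * z r x) - χ x * (w (t - s) x * z s x) =
        χ x * ((w (t - r) x - w (t - s) x) * z r x + w (t - s) x * (z r x - z s x)) := by ring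
    have h6 : 0 ≤ (r - s) * (K * g x + C * g x) := by
      have := hg x
      positivity
    have h7 := mul_le_mul_of_nonneg_left (add_le_add h3 h4) (hχ x).1
    have h8 := mul_le_mul_of_nonneg_right (hχ x).2 h6
    rw [h5]
    linarith
  · have i1 : Integrable fun x => χ x * w (t - s) x * z s x ^ 2 :=
      Continuous.integrable_of_hasCompactSupport (by fun_prop) hχc.mul_right.mul_right
    have i2 : Integrable fun x => χ x * (w (t - s) x * deriv (deriv (z s)) x -
        deriv (deriv (w (t - s))) x * z s x) :=
      Continuous.integrable_of_hasCompactSupport (by fun_prop) hχc.mul_right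
    have i3 : Integrable fun x => 2 * deriv χ x * deriv (w (t - s)) x +
        deriv (deriv χ) x * w (t - s) x := by
      refine Continuous.integrable_of_hasCompactSupport (by fun_prop) ?_
      exact ((hχc.deriv.mul_left (f := fun _ => 2)).mul_right).add hχc.deriv.deriv.mul_right
    have iχw : Integrable fun x => χ x * w (t - s) x :=
      Continuous.integrable_of_hasCompactSupport (by fun_prop) hχc.mul_right
    have hCS := sq_integral_mul_div_le (z := z s) (L := ∫ x, w (t - s) x)
      (fun x => mul_nonneg (hχ x).1 (hw.nonneg _ hs' x)) iχw
      (by simpa only [mul_assoc] using integrable_mul_pairing hw hz htT cχ hχ hs) i1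
      (hw.pos _ hs') (integral_mono iχw (hw.integrable hs') fun x => by
        simpa using mul_le_mul_of_nonneg_right (hχ x).2 (hw.nonneg _ hs' x))
    simp only [mul_assoc] at hCS
    have hgreen := integral_mul_sub_eq_of_hasCompactSupport hχ2 hχc hp hq
    have herr : -(K * E) ≤ ∫ x, (2 * deriv χ x * deriv (w (t - s)) x +
        deriv (deriv χ) x * w (t - s) x) * z s x := by
      refine neg_le_of_abs_le ?_
      rw [← Real.norm_eq_abs]
      refine (norm_integral_le_of_norm_le (i3.abs.const_mul K)
        (Eventually.of_forall fun x => ?_)).trans ?_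
      · rw [norm_mul, mul_comm, Real.norm_of_nonneg (hz.nonneg s hsT x)]
        exact mul_le_mul_of_nonneg_right (hz.le s hsT x) (abs_nonneg _)
      · rw [integral_const_mul]
        exact mul_le_mul_of_nonneg_left (hE _ hs') hK
    have hmono : ∫ x, (χ x * (w (t - s) x * z s x ^ 2) + χ x * (w (t - s) x *
        deriv (deriv (z s)) x - deriv (deriv (w (t - s))) x * z s x)) ≤
        ∫ x, χ x * (-(deriv (deriv (w (t - s))) x - 2 * f x * w (t - s) x) *
          z s x + w (t - s) x * d s x) := by
      refine integral_mono ((by simpa only [mul_assoc] using i1 : Integrable fun x =>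
        χ x * (w (t - s) x * z s x ^ 2)).add i2) iH' fun x => ?_
      have h1 := mul_le_mul_of_nonneg_left (hz.le_deriv s hsT x)
        (mul_nonneg (hχ x).1 (hw.nonneg _ hs' x))
      simp only
      linarith
    rw [integral_add (by simpa only [mul_assoc] using i1) i2, hgreen] at hmono
    linarith

end Pairing

theorem ContinuousOn.hasDerivWithinAt_integral_Ici {l : ℝ → ℝ} {a b s : ℝ}
    (hl : ContinuousOn l (Set.Icc a b)) (hs : s ∈ Set.Ico a b) :
    HasDerivWithinAt (fun r => ∫ σ in a..r, l σ) (l s) (Set.Ici s) s := by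
  have hmem : Set.Icc a b ∈ nhdsWithin s (Set.Ioi s) :=
    mem_of_superset (Ioo_mem_nhdsGT hs.2) fun r hr => ⟨hs.1.trans hr.1.le, hr.2.le⟩
  refine intervalIntegral.integral_hasDerivWithinAt_right (t := Set.Ioi s)
    (hl.mono ?_).intervalIntegrable
    ⟨_, hmem, hl.aestronglyMeasurable measurableSet_Icc⟩
    ((hl s ⟨hs.1, hs.2.le⟩).mono_of_mem_nhdsWithin hmem)
  rw [Set.uIcc_of_le hs.1]
  exact Set.Icc_subset_Icc_right hs.2.le

theorem ContinuousOn.continuousOn_integral {l : ℝ → ℝ} {a b : ℝ}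
    (hl : ContinuousOn l (Set.Icc a b)) :
    ContinuousOn (fun r => ∫ σ in a..r, l σ) (Set.Icc a b) := by
  rcases le_total a b with h | h
  · rw [← Set.uIcc_of_le h]
    refine intervalIntegral.continuousOn_primitive_interval ?_
    rw [Set.uIcc_of_le h]
    exact hl.integrableOn_Icc
  · exact (Set.subsingleton_Icc_of_ge h).continuousOn _

/-- A continuous supersolution of `Ψ' = Ψ² l` starting from a positive value cannot exist past the
blow-up time. -/
theorem mul_integral_le_one_of_riccati {Ψ l : ℝ → ℝ} {b : ℝ} (hb : 0 ≤ b)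
    (hΨ : ContinuousOn Ψ (Set.Icc 0 b)) (hl : ContinuousOn l (Set.Icc 0 b))
    (hl0 : ∀ s ∈ Set.Icc 0 b, 0 ≤ l s) (hΨ0 : 0 < Ψ 0)
    (h : ∀ s ∈ Set.Icc 0 b, Ψ 0 + ∫ σ in (0 : ℝ)..s, Ψ σ ^ 2 * l σ ≤ Ψ s) :
    Ψ 0 * ∫ σ in (0 : ℝ)..b, l σ ≤ 1 := by
  have hc : ContinuousOn (fun σ => Ψ σ ^ 2 * l σ) (Set.Icc 0 b) := (hΨ.pow 2).mul hl
  set Y : ℝ → ℝ := fun s => Ψ 0 + ∫ σ in (0 : ℝ)..s, Ψ σ ^ 2 * l σ with hY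
  have hYpos : ∀ s ∈ Set.Icc 0 b, Ψ 0 ≤ Y s := fun s hs => by
    have : 0 ≤ ∫ σ in (0 : ℝ)..s, Ψ σ ^ 2 * l σ :=
      intervalIntegral.integral_nonneg hs.1 fun σ hσ =>
        mul_nonneg (sq_nonneg _) (hl0 σ ⟨hσ.1, hσ.2.trans hs.2⟩)
    simp only [hY]
    linarith
  have hYc : ContinuousOn Y (Set.Icc 0 b) := continuousOn_const.add hc.continuousOn_integral
  have key := image_le_of_deriv_right_le_deriv_boundary
    (f := fun s => (Y s)⁻¹ + ∫ σ in (0 : ℝ)..s, l σ)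
    (f' := fun s => -(Ψ s ^ 2 * l s) / Y s ^ 2 + l s) (a := 0) (b := b)
    (B := fun _ => (Ψ 0)⁻¹) (B' := fun _ => 0)
    ((hYc.inv₀ fun s hs => (hΨ0.trans_le (hYpos s hs)).ne').add hl.continuousOn_integral)
    (fun s hs => ((hc.hasDerivWithinAt_integral_Ici hs).const_add (Ψ 0)).inv
      (hΨ0.trans_le (hYpos s ⟨hs.1, hs.2.le⟩)).ne' |>.add (hl.hasDerivWithinAt_integral_Ici hs))
    (by simp [hY]) continuousOn_const (fun s _ => hasDerivWithinAt_const _ _ _)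
    (fun s hs => by
      have hs' : s ∈ Set.Icc 0 b := ⟨hs.1, hs.2.le⟩
      have h1 : 0 < Y s := hΨ0.trans_le (hYpos s hs')
      have h2 : l s ≤ Ψ s ^ 2 * l s / Y s ^ 2 := by
        rw [le_div_iff₀ (by positivity), mul_comm]
        exact mul_le_mul_of_nonneg_right (pow_le_pow_left₀ h1.le (h s hs') 2) (hl0 s hs')
      rw [neg_div]
      linarith)
    (Set.right_mem_Icc.2 hb)
  have h1 : 0 < (Y b)⁻¹ := inv_pos.2 (hΨ0.trans_le (hYpos b (Set.right_mem_Icc.2 hb)))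
  have h2 : ∫ σ in (0 : ℝ)..b, l σ ≤ (Ψ 0)⁻¹ := by
    linarith
  calc _ ≤ Ψ 0 * (Ψ 0)⁻¹ := mul_le_mul_of_nonneg_left h2 hΨ0.le
    _ = 1 := mul_inv_cancel₀ hΨ0.ne'

section Pairing

variable {f g χ : ℝ → ℝ} {w z d : ℝ → ℝ → ℝ} {t T K F : ℝ}

theorem continuousOn_integral_reverse (hw : IsDominatedSolution f w g t) :
    ContinuousOn (fun s => ∫ x, w (t - s) x) (Set.Ico 0 t) :=
  hw.continuousOn_integral.comp (continuousOn_const.sub continuousOn_id)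
    fun s hs => ⟨sub_pos.2 hs.2, by simpa using hs.1⟩

theorem integral_pairing_ge_of_cutoff (hw : IsDominatedSolution f w g t)
    (hz : IsBoundedSupersolution f z d K T) (htT : t < T) (hf : Continuous f)
    (hF : ∀ x, f x ≤ F) (hF0 : 0 ≤ F) (hχ2 : ContDiff ℝ 2 χ) (hχc : HasCompactSupport χ)
    (hχ : ∀ x, 0 ≤ χ x ∧ χ x ≤ 1) {E : ℝ}
    (hE : ∀ s ∈ Set.Ioc 0 t,
      ∫ x, |2 * deriv χ x * deriv (w s) x + deriv (deriv χ) x * w s x| ≤ E)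
    {s : ℝ} (hs : s ∈ Set.Ico 0 t) :
    (∫ x, χ x * (w t x * z 0 x)) +
      ∫ σ in (0 : ℝ)..s, ((∫ x, χ x * (w (t - σ) x * z σ x)) ^ 2 / (∫ x, w (t - σ) x) - K * E) ≤
      ∫ x, χ x * (w (t - s) x * z s x) := by
  have hsub : Set.Icc 0 s ⊆ Set.Ico 0 t := Set.Icc_subset_Ico_right hs.2
  have hΨ := continuousOn_integral_mul_pairing hw hz htT hχ2.continuous hχ
  have hl : ContinuousOn (fun σ => (∫ x, χ x * (w (t - σ) x * z σ x)) ^ 2 /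
      (∫ x, w (t - σ) x) - K * E) (Set.Icc 0 s) :=
    (((hΨ.pow 2).div (continuousOn_integral_reverse hw) fun σ hσ =>
      (hw.pos _ ⟨sub_pos.2 hσ.2, by linarith [hσ.1]⟩).ne').sub continuousOn_const).mono hsub
  refine le_of_eventually_lt_slope (hΨ.mono hsub)
    (B := fun s => (∫ x, χ x * (w t x * z 0 x)) + ∫ σ in (0 : ℝ)..s,
      ((∫ x, χ x * (w (t - σ) x * z σ x)) ^ 2 / (∫ x, w (t - σ) x) - K * E))
    (continuousOn_const.add hl.continuousOn_integral) (by simp)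
    (fun σ hσ => (hl.hasDerivWithinAt_integral_Ici hσ).const_add _)
    (fun σ hσ c hc => eventually_lt_slope_pairing hw hz htT hf hF hF0 hχ2 hχc hχ hE
      ⟨hσ.1, hσ.2.trans hs.2⟩ hc) s (Set.right_mem_Icc.2 hs.1)

/-- Integrated Riccati inequality for the pairing of a bounded supersolution with a time-reversed
solution of the linearized equation. -/
theorem integral_pairing_ge (hw : IsDominatedSolution f w g t)
    (hz : IsBoundedSupersolution f z d K T) (htT : t < T) (hf : Continuous f)
    (hf0 : ∀ x, 0 ≤ f x) (hF : ∀ x, f x ≤ F) {s : ℝ} (hs : s ∈ Set.Ico 0 t) :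
    (∫ x, w t x * z 0 x) +
      ∫ σ in (0 : ℝ)..s, (∫ x, w (t - σ) x * z σ x) ^ 2 * (∫ x, w (t - σ) x)⁻¹ ≤
      ∫ x, w (t - s) x * z s x := by
  choose χ hχ2 hχc hχ hχ1 hE using hw.exists_cutoff hf0 hF
  have hF0 : 0 ≤ F := (hf0 0).trans (hF 0)
  have ht0 : (0 : ℝ) ∈ Set.Ico 0 t := ⟨le_rfl, hs.1.trans_lt hs.2⟩
  have hIn : ∀ σ ∈ Set.Ico 0 t, Tendsto (fun n => ∫ x, χ n x * (w (t - σ) x * z σ x)) atTop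
      (nhds (∫ x, w (t - σ) x * z σ x)) := by
    intro σ hσ
    refine tendsto_integral_of_dominated_convergence (fun x => K * g x)
      (fun n => (continuous_mul_pairing hw hz htT (hχ2 n).continuous hσ).aestronglyMeasurable)
      (hw.integrable_bound.const_mul K)
      (fun n => Eventually.of_forall (abs_mul_pairing_le hw hz htT (hχ n) hσ))
      (Eventually.of_forall fun x => tendsto_const_nhds.congr' ?_)
    obtain ⟨N, hN⟩ := exists_nat_ge |x|
    filter_upwards [eventually_ge_atTop N] with n hn
    rw [hχ1 n x (hN.trans (Nat.cast_le.2 hn)), one_mul]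
  have hsub : Set.uIoc 0 s ⊆ Set.Ico 0 t := by
    rw [Set.uIoc_of_le hs.1]
    exact fun σ hσ => ⟨hσ.1.le, hσ.2.trans_lt hs.2⟩
  have hEn : Tendsto (fun n : ℕ => K * (1 / ((n : ℝ) + 1))) atTop (nhds 0) := by
    simpa using tendsto_one_div_add_atTop_nhds_zero_nat.const_mul K
  have hK : 0 ≤ K := hz.bound_nonneg (ht0.2.trans htT)
  have hpos : ∀ σ ∈ Set.Ico 0 t, 0 < ∫ x, w (t - σ) x := fun σ hσ =>
    hw.pos _ ⟨sub_pos.2 hσ.2, by linarith [hσ.1]⟩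
  have hLc := continuousOn_integral_reverse hw
  have hint : Tendsto (fun n : ℕ => ∫ σ in (0 : ℝ)..s,
      ((∫ x, χ n x * (w (t - σ) x * z σ x)) ^ 2 / (∫ x, w (t - σ) x) -
        K * (1 / ((n : ℝ) + 1)))) atTop (nhds (∫ σ in (0 : ℝ)..s,
      (∫ x, w (t - σ) x * z σ x) ^ 2 * (∫ x, w (t - σ) x)⁻¹)) := by
    refine intervalIntegral.tendsto_integral_filter_of_dominated_convergence
      (fun σ => (K * ∫ x, g x) ^ 2 / (∫ x, w (t - σ) x) + K) ?_ ?_ ?_ ?_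
    · refine Eventually.of_forall fun n => ?_
      refine ContinuousOn.aestronglyMeasurable (ContinuousOn.mono ?_ hsub) measurableSet_uIoc
      exact (((continuousOn_integral_mul_pairing hw hz htT (hχ2 n).continuous (hχ n)).pow 2).div
        hLc fun σ hσ => (hpos σ hσ).ne').sub continuousOn_const
    · refine Eventually.of_forall fun n => Eventually.of_forall fun σ hσ => ?_
      have h1 : |∫ x, χ n x * (w (t - σ) x * z σ x)| ≤ K * ∫ x, g x := by
        rw [← integral_const_mul, ← Real.norm_eq_abs]
        exact norm_integral_le_of_norm_le (hw.integrable_bound.const_mul K)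
          (Eventually.of_forall (abs_mul_pairing_le hw hz htT (hχ n) (hsub hσ)))
      refine (norm_sub_le _ _).trans (add_le_add ?_ ?_)
      · rw [norm_div, norm_pow, Real.norm_of_nonneg (hpos σ (hsub hσ)).le]
        exact div_le_div_of_nonneg_right (pow_le_pow_left₀ (norm_nonneg _) h1 2)
          (hpos σ (hsub hσ)).le
      · have h2 : 1 / ((n : ℝ) + 1) ≤ 1 := by
          rw [div_le_one (by positivity)]
          linarith [n.cast_nonneg (α := ℝ)]
        rw [Real.norm_of_nonneg (by positivity)]
        exact mul_le_of_le_one_right hK h2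
    · refine ContinuousOn.intervalIntegrable ?_
      rw [Set.uIcc_of_le hs.1]
      exact ((continuousOn_const.div hLc fun σ hσ => (hpos σ hσ).ne').add
        continuousOn_const).mono (Set.Icc_subset_Ico_right hs.2)
    · refine Eventually.of_forall fun σ hσ => ?_
      simpa [div_eq_mul_inv] using
        (((hIn σ (hsub hσ)).pow 2).div_const (∫ x, w (t - σ) x)).sub hEn
  have h0 := hIn 0 ht0
  simp only [sub_zero] at h0
  exact le_of_tendsto_of_tendsto' (h0.add hint) (hIn s hs) fun n =>
    integral_pairing_ge_of_cutoff hw hz htT hf hF hF0 (hχ2 n) (hχc n) (hχ n) (hE n) hs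

theorem integral_pairing_mul_le_one (hw : IsDominatedSolution f w g t)
    (hz : IsBoundedSupersolution f z d K T) (htT : t < T) (hf : Continuous f)
    (hf0 : ∀ x, 0 ≤ f x) (hF : ∀ x, f x ≤ F) {δ : ℝ} (hδ : δ ∈ Set.Ioc 0 t) :
    (∫ x, w t x * z 0 x) * ∫ τ in δ..t, (∫ x, w τ x)⁻¹ ≤ 1 := by
  have hb : t - δ ∈ Set.Ico 0 t := ⟨sub_nonneg.2 hδ.2, sub_lt_self _ hδ.1⟩
  have hsub : Set.Icc 0 (t - δ) ⊆ Set.Ico 0 t := Set.Icc_subset_Ico_right hb.2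
  have hpos : ∀ σ ∈ Set.Ico 0 t, 0 < ∫ x, w (t - σ) x := fun σ hσ =>
    hw.pos _ ⟨sub_pos.2 hσ.2, by linarith [hσ.1]⟩
  have hnn : 0 ≤ ∫ τ in δ..t, (∫ x, w τ x)⁻¹ :=
    intervalIntegral.integral_nonneg hδ.2 fun τ hτ =>
      (inv_pos.2 (hw.pos τ ⟨hδ.1.trans_le hτ.1, hτ.2⟩)).le
  rcases le_or_gt (∫ x, w t x * z 0 x) 0 with h0 | h0
  · exact (mul_nonpos_of_nonpos_of_nonneg h0 hnn).trans zero_le_one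
  have hΨ := continuousOn_integral_mul_pairing (χ := fun _ => 1) hw hz htT continuous_const
    fun _ => ⟨zero_le_one, le_rfl⟩
  simp only [one_mul] at hΨ
  have h1 := mul_integral_le_one_of_riccati (Ψ := fun s => ∫ x, w (t - s) x * z s x)
    (l := fun s => (∫ x, w (t - s) x)⁻¹) hb.1 (hΨ.mono hsub)
    (((continuousOn_integral_reverse hw).inv₀ fun σ hσ => (hpos σ hσ).ne').mono hsub)
    (fun σ hσ => (inv_pos.2 (hpos σ (hsub hσ))).le) (by simpa using h0)
    (fun σ hσ => by simpa using integral_pairing_ge hw hz htT hf hf0 hF (hsub hσ))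
  rw [intervalIntegral.integral_comp_sub_left (fun τ => (∫ x, w τ x)⁻¹) t] at h1
  simpa using h1

end Pairing

/-- If a positive function integrates over `[δ, t]` to at most `P⁻¹` for all `δ`, then it does so
over `[0, t]`. -/
theorem le_inv_integral_of_forall_mul_le_one {l : ℝ → ℝ} {t P : ℝ} (ht : 0 < t)
    (hl : ContinuousOn l (Set.Ioc 0 t)) (hpos : ∀ s ∈ Set.Ioc 0 t, 0 < l s)
    (h : ∀ δ ∈ Set.Ioc 0 t, P * ∫ s in δ..t, l s ≤ 1) : P ≤ (∫ s in (0 : ℝ)..t, l s)⁻¹ := by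
  have hnn : 0 ≤ ∫ s in (0 : ℝ)..t, l s := by
    rw [intervalIntegral.integral_of_le ht.le]
    exact setIntegral_nonneg measurableSet_Ioc fun s hs => (hpos s hs).le
  rcases le_or_gt P 0 with hP | hP
  · exact hP.trans (inv_nonneg.2 hnn)
  have hδ : ∀ n : ℕ, t / ((n : ℝ) + 1) ∈ Set.Ioc 0 t := fun n => by
    refine ⟨by positivity, div_le_self ht.le ?_⟩
    linarith [n.cast_nonneg (α := ℝ)]
  have hlim : Tendsto (fun n : ℕ => t / ((n : ℝ) + 1)) atTop (nhds 0) := by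
    simpa [div_eq_mul_inv] using tendsto_one_div_add_atTop_nhds_zero_nat.const_mul t
  have hint : IntegrableOn l (Set.Ioc 0 t) := by
    refine integrableOn_Ioc_of_intervalIntegral_norm_bounded_left (I := P⁻¹) (l := atTop)
      (fun n : ℕ => ((hl.mono ?_).integrableOn_Icc (a := t / ((n : ℝ) + 1))).mono_set
        Set.Ioc_subset_Icc_self) hlim (Eventually.of_forall fun n => ?_)
    · exact fun s hs => ⟨(hδ n).1.trans_le hs.1, hs.2⟩
    · have h1 := h _ (hδ n)
      rw [intervalIntegral.integral_of_le (hδ n).2] at h1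
      rw [setIntegral_congr_fun (g := l) measurableSet_Ioc fun s hs =>
        Real.norm_of_nonneg (hpos s ⟨(hδ n).1.trans hs.1, hs.2⟩).le]
      rwa [← one_div, le_div_iff₀ hP, mul_comm]
  have hII : IntervalIntegrable l volume 0 t := (intervalIntegrable_iff_integrableOn_Ioc_of_le
    ht.le).2 hint
  have hI : 0 < ∫ s in (0 : ℝ)..t, l s :=
    intervalIntegral.intervalIntegral_pos_of_pos_on hII (fun s hs => hpos s ⟨hs.1, hs.2.le⟩) ht
  have hcont : ContinuousOn (fun δ => ∫ s in δ..t, l s) (Set.Icc 0 t) := by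
    have := intervalIntegral.continuousOn_primitive_interval_left (μ := volume) (f := l)
      (a := 0) (b := t)
    rw [Set.uIcc_of_le ht.le] at this
    exact this ((integrableOn_Icc_iff_integrableOn_Ioc).2 hint)
  have hlim' : Tendsto (fun n : ℕ => P * ∫ s in t / ((n : ℝ) + 1)..t, l s) atTop
      (nhds (P * ∫ s in (0 : ℝ)..t, l s)) := by
    refine ((hcont 0 ⟨le_rfl, ht.le⟩).tendsto.comp (tendsto_nhdsWithin_iff.2
      ⟨hlim, Eventually.of_forall fun n => ?_⟩)).const_mul P
    exact ⟨(hδ n).1.le, (hδ n).2⟩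
  have h1 : P * ∫ s in (0 : ℝ)..t, l s ≤ 1 := le_of_tendsto' hlim' fun n => h _ (hδ n)
  rwa [← one_div, le_div_iff₀ hI]

theorem exists_bound_of_tendsto_cocompact {f : ℝ → ℝ} (hf : Continuous f)
    (hlim : Tendsto f (cocompact ℝ) (nhds 0)) : ∃ F, ∀ x, f x ≤ F := by
  obtain ⟨F, hF⟩ := (ZeroAtInftyContinuousMap.isBounded_range
    (⟨⟨f, hf⟩, hlim⟩ : ZeroAtInftyContinuousMap ℝ ℝ)).bddAbove
  exact ⟨F, fun x => hF ⟨x, rfl⟩⟩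

/-- Lemma (main fence inequality): for a nonpositive bounded classical solution `u` of
`∂u/∂t = ∂²u/∂x² − 2 f u − u²` with `u(0,·) = h`, and a solution `w` of the linearized
equation `∂w/∂t = ∂²w/∂x² − 2 f w` with nonnegative integrable initial datum and the
regularity/decay from parabolic theory, for every `t ∈ (0,T)`:
`−∫ w(t,x) h(x) dx ≤ (∫₀ᵗ 1/‖w(s,·)‖_{L¹} ds)⁻¹`. -/
theorem fence_inequality
    (f : ℝ → ℝ) (hf_smooth : ContDiff ℝ (⊤ : ℕ∞) f) (hf_pos : ∀ x, 0 < f x)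
    (hf_decay : Tendsto f (cocompact ℝ) (nhds 0))
    (hf_d1 : ∃ M : ℝ, ∀ x, |deriv f x| ≤ M)
    (hf_d2 : ∃ M : ℝ, ∀ x, |deriv (deriv f) x| ≤ M)
    (T : ℝ) (hT : 0 < T) (h : ℝ → ℝ)
    (u : ℝ → ℝ → ℝ)
    (hu0 : ∀ x, u 0 x = h x)
    (hu_eq : ∀ s ∈ Set.Ico (0 : ℝ) T, ∀ x : ℝ,
      HasDerivAt (fun τ => u τ x)
        (deriv (deriv (u s)) x - 2 * f x * u s x - (u s x) ^ 2) s)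
    (hu_reg : ∀ s ∈ Set.Ico (0 : ℝ) T, ContDiff ℝ 2 (u s))
    (hu_cont : ∀ x, ContinuousOn (fun s => u s x) (Set.Ico (0 : ℝ) T))
    (hu_nonpos : ∀ s ∈ Set.Ico (0 : ℝ) T, ∀ x, u s x ≤ 0)
    (hu_bdd : ∀ s ∈ Set.Ico (0 : ℝ) T, ∃ M : ℝ, ∀ x, |u s x| ≤ M)
    (w : ℝ → ℝ → ℝ) (w₀ : ℝ → ℝ)
    (hw0 : ∀ x, w 0 x = w₀ x)
    (hw0_nonneg : ∀ x, 0 ≤ w₀ x) (hw0_int : Integrable w₀)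
    (hw_eq : ∀ s : ℝ, 0 < s → ∀ x : ℝ,
      HasDerivAt (fun τ => w τ x)
        (deriv (deriv (w s)) x - 2 * f x * w s x) s)
    (hw_reg : ∀ s : ℝ, 0 ≤ s → ContDiff ℝ 2 (w s))
    (hw_nonneg : ∀ s : ℝ, 0 ≤ s → ∀ x, 0 ≤ w s x)
    (hw_int : ∀ s : ℝ, 0 ≤ s → Integrable (w s) ∧ Integrable (deriv (w s)))
    (hw_decay : ∀ s : ℝ, 0 ≤ s →
      Tendsto (w s) (cocompact ℝ) (nhds 0) ∧
        Tendsto (deriv (w s)) (cocompact ℝ) (nhds 0))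
    (hw_pos : ∀ s : ℝ, 0 ≤ s → 0 < ∫ x, |w s x|)
    (hw_unif : ∀ t₀ : ℝ, 0 ≤ t₀ → ∃ g : ℝ → ℝ, Integrable g ∧
      ∀ s ∈ Set.Icc (0 : ℝ) t₀, ∀ x,
        |w s x| ≤ g x ∧ |deriv (fun τ => w τ x) s| ≤ g x) :
    ∀ t ∈ Set.Ioo (0 : ℝ) T,
      -(∫ x, w t x * h x) ≤ (∫ s in (0 : ℝ)..t, 1 / ∫ x, |w s x|)⁻¹ := by
  intro t ht
  obtain ⟨F, hF⟩ := exists_bound_of_tendsto_cocompact hf_smooth.continuous hf_decay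
  obtain ⟨g, hg, hgb⟩ := hw_unif t ht.1.le
  have hf0 : ∀ x, 0 ≤ f x := fun x => (hf_pos x).le
  have habs : ∀ s, 0 ≤ s → (∫ x, |w s x|) = ∫ x, w s x := fun s hs => by
    simp only [abs_of_nonneg (hw_nonneg s hs _)]
  have hw : IsDominatedSolution f w g t :=
    { integrable_bound := hg
      nonneg := fun s hs => hw_nonneg s hs.1.le
      contDiff := fun s hs => hw_reg s hs.1.le
      hasDerivAt := fun s hs => hw_eq s hs.1
      le := fun s hs x => (le_abs_self _).trans (hgb s ⟨hs.1.le, hs.2⟩ x).1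
      abs_deriv_le := fun s hs x => by
        rw [← (hw_eq s hs.1 x).deriv]
        exact (hgb s ⟨hs.1.le, hs.2⟩ x).2
      tendsto_deriv := fun s hs => (hw_decay s hs.1.le).2
      pos := fun s hs => habs s hs.1.le ▸ hw_pos s hs.1.le }
  have h0T : (0 : ℝ) ∈ Set.Ico 0 T := ⟨le_rfl, hT⟩
  have htt : t ∈ Set.Ioc 0 t := ⟨ht.1, le_rfl⟩
  obtain ⟨M, hM⟩ := hu_bdd 0 h0T
  have hε : ∀ n : ℕ, (0 : ℝ) < 1 / ((n : ℝ) + 1) := fun n => by positivity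
  have hlim : Tendsto (fun n : ℕ => ∫ x, w t x * (-u 0 x / (1 + 1 / ((n : ℝ) + 1) * -u 0 x)))
      atTop (nhds (∫ x, w t x * -u 0 x)) := by
    refine tendsto_integral_of_dominated_convergence (fun x => w t x * M) (fun n => ?_)
      ((hw.integrable htt).mul_const M) (fun n => Eventually.of_forall fun x => ?_)
      (Eventually.of_forall fun x => ?_)
    · have hz := isBoundedSupersolution_truncation hf_smooth.continuous hf0 (hε n) hu_eq hu_reg
        hu_nonpos
      exact ((hw_reg t ht.1.le).continuous.mul (hz.contDiff 0 h0T).continuous).aestronglyMeasurable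
    · have h1 : 0 ≤ -u 0 x := by linarith [hu_nonpos 0 h0T x]
      have h2 := mul_nonneg (hε n).le h1
      rw [norm_mul, Real.norm_of_nonneg (hw_nonneg t ht.1.le x),
        Real.norm_of_nonneg (div_nonneg h1 (by linarith))]
      refine mul_le_mul_of_nonneg_left ?_ (hw_nonneg t ht.1.le x)
      exact (div_le_self h1 (by linarith)).trans ((neg_le_abs _).trans (hM x))
    · have h1 := (tendsto_one_div_add_atTop_nhds_zero_nat (𝕜 := ℝ)).mul_const (-u 0 x)
      simpa using ((tendsto_const_nhds (x := -u 0 x)).div (h1.const_add 1) (by simp)).const_mul (w t x)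
  have hcongr : (∫ s in (0 : ℝ)..t, 1 / ∫ x, |w s x|) = ∫ s in (0 : ℝ)..t, (∫ x, w s x)⁻¹ := by
    refine intervalIntegral.integral_congr fun s hs => ?_
    rw [Set.uIcc_of_le ht.1.le] at hs
    simp only [one_div, habs s hs.1]
  have hP : -(∫ x, w t x * h x) = ∫ x, w t x * -u 0 x := by
    simp only [hu0, mul_neg, integral_neg]
  rw [hcongr, hP]
  refine le_inv_integral_of_forall_mul_le_one ht.1
    (hw.continuousOn_integral.inv₀ fun s hs => (hw.pos s hs).ne')
    (fun s hs => inv_pos.2 (hw.pos s hs)) fun δ hδ => ?_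
  exact le_of_tendsto' (hlim.mul_const _) fun n => integral_pairing_mul_le_one hw
    (isBoundedSupersolution_truncation hf_smooth.continuous hf0 (hε n) hu_eq hu_reg hu_nonpos)
    ht.2 hf_smooth.continuous hf0 hF hδ
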